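/- arXiv:2103.09731 — 2 statements merged into one kernel-verified Lean document; each statement's English description precedes it below -/
import Mathlib

section
/- For every ε > 0, every connected weighted graph G on n vertices admits a subgraph H such that d_H(s,t) ≤ d_G(s,t) + (4+ε)·W(s,t) for all vertices s,t ∈ V, and lightness(H) ≤ C(ε)·n^{2/3}, where C(ε) depends only polynomially on 1/ε. -/
open scoped ENNReal Classical

/-- The total weight of a walk: the sum of the weights of its edges. -/
noncomputable def walkWeight {V : Type} (G : SimpleGraph V) (w : Sym2 V → ℝ≥0∞)
    {s t : V} (p : G.Walk s t) : ℝ≥0∞ :=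
  (p.edges.map w).sum

/-- Shortest-path distance in the weighted graph `(G, w)`, equal to `⊤` if there is no path. -/
noncomputable def gdist {V : Type} (G : SimpleGraph V) (w : Sym2 V → ℝ≥0∞)
    (s t : V) : ℝ≥0∞ :=
  ⨅ p : G.Walk s t, walkWeight G w p

/-- The maximum edge weight along a walk (0 for the trivial walk). -/
noncomputable def maxEdge {V : Type} (G : SimpleGraph V) (w : Sym2 V → ℝ≥0∞)
    {s t : V} (p : G.Walk s t) : ℝ≥0∞ :=
  (p.edges.map w).foldr max 0

/-- `π` assigns to each ordered vertex pair a shortest path: a walk whose total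
weight equals the shortest-path distance. -/
def IsShortestPathScheme {V : Type} (G : SimpleGraph V) (w : Sym2 V → ℝ≥0∞)
    (π : (s t : V) → G.Walk s t) : Prop :=
  ∀ s t : V, walkWeight G w (π s t) = gdist G w s t

/-- The edge weights are positive and finite on all edges of `G`. -/
def PosWeights {V : Type} (G : SimpleGraph V) (w : Sym2 V → ℝ≥0∞) : Prop :=
  ∀ e ∈ G.edgeSet, 0 < w e ∧ w e ≠ ⊤

/-- The total edge weight of a graph. -/
noncomputable def totalWeight {V : Type} (G : SimpleGraph V) (w : Sym2 V → ℝ≥0∞) : ℝ≥0∞ :=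
  ∑' e : G.edgeSet, w e

/-- The weight of a minimum spanning tree of `G`: since edge weights are positive, this is
the minimum total weight of a connected spanning subgraph of `G`. -/
noncomputable def mstWeight {V : Type} (G : SimpleGraph V) (w : Sym2 V → ℝ≥0∞) : ℝ≥0∞ :=
  ⨅ (T : SimpleGraph V) (_ : T ≤ G) (_ : T.Connected), totalWeight T w

/-!
Let `T` be a minimum spanning tree, `M = 2 * w(T)` and `a ≈ n^(1/5)`. Opening a gap in the line for
each new vertex of `T` places the vertices in `[0, M]` without shrinking any tree distance, so
cutting this interval into cells gives clusters of small tree diameter. Up to a factor `2` there are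
`O(log n)` values in `[M / a^7, M]` for the largest edge weight `ω` of a path; all lighter edges
together weigh at most `a^3 * M` and are kept. For each scale `W ≈ ω`, greedy hitting sets yield
`O(a^3 * log n)` hubs such that

* a path meeting many cells of length `W / 8` has a hub near it, and any other path is a geodesic
  of length at most `2 * M / a^3`;
* an edge `uv` from whose cell many cells can be reached by edges of no larger weight has a hub near
  `u`, while the remaining edges lie between few pairs of cells, and one representative for each
  pair of subcells approximates them with error `2 * a^3 / M * w(uv)^2`.

If no hub is near the geodesic from `s` to `t`, the errors along it add up to at most
`2 * a^3 / M * ω * d(s, t) ≤ 4 * ω`. If the hub `r` is within `3 / 2 * ω` of a vertex of it, then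
going through `r` costs `3 * ω`, plus `W / 4 ≤ ω / 2` twice, provided that distances from `r` in
the graph of edges of weight at most `W` are preserved up to `W / 4`. Such a preserver of weight
`O(M * log^2 n)` is built greedily: adding the end of a violated geodesic, cut at the point where
the weight to be added at most doubles from one of `O(log n)` error levels to the next, lowers the
error level of a number of cells proportional to its weight. In total the edges weigh
`O(n^(3/5) * log^5 n) * w(T)`.
-/

section WeightedDistance

open SimpleGraph

open scoped NNReal

variable {V : Type*} {G H : SimpleGraph V} {w : Sym2 V → ℝ≥0} {u v x : V}

/-- The length of a walk with respect to finite edge weights, as a real number. -/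
noncomputable def walkLength (w : Sym2 V → ℝ≥0) (p : G.Walk u v) : ℝ :=
  (p.edges.map fun e ↦ (w e : ℝ)).sum

/-- The weighted shortest-path distance of `G`, as a real number. Like every real infimum over an
empty family it is `0` when `u` and `v` are not connected. -/
noncomputable def wdist (w : Sym2 V → ℝ≥0) (G : SimpleGraph V) (u v : V) : ℝ :=
  ⨅ p : G.Walk u v, walkLength w p

@[simp] lemma walkLength_nil : walkLength w (Walk.nil : G.Walk u u) = 0 := rfl

@[simp] lemma walkLength_cons (h : G.Adj u v) (p : G.Walk v x) :
    walkLength w (p.cons h) = w s(u, v) + walkLength w p := rfl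

lemma walkLength_append (p : G.Walk u v) (q : G.Walk v x) :
    walkLength w (p.append q) = walkLength w p + walkLength w q := by
  simp [walkLength]

lemma walkLength_reverse (p : G.Walk u v) : walkLength w p.reverse = walkLength w p := by
  simp [walkLength, List.sum_reverse]

lemma walkLength_mapLe (h : G ≤ H) (p : G.Walk u v) :
    walkLength w (p.mapLe h) = walkLength w p := by
  simp [walkLength]

lemma walkLength_transfer (p : G.Walk u v) (h : ∀ e ∈ p.edges, e ∈ H.edgeSet) :
    walkLength w (p.transfer H h) = walkLength w p := by
  simp [walkLength]

lemma walkLength_nonneg (w : Sym2 V → ℝ≥0) (p : G.Walk u v) : 0 ≤ walkLength w p :=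
  List.sum_nonneg (by simp)

lemma walkLength_bypass_le (p : G.Walk u v) : walkLength w p.bypass ≤ walkLength w p :=
  (p.edges_bypass_sublist_edges.map _).sum_le_sum (by simp)

lemma bddBelow_range_walkLength (w : Sym2 V → ℝ≥0) (G : SimpleGraph V) (u v : V) :
    BddBelow (Set.range fun p : G.Walk u v ↦ walkLength w p) :=
  ⟨0, Set.forall_mem_range.2 (walkLength_nonneg w)⟩

lemma wdist_le_walkLength (p : G.Walk u v) : wdist w G u v ≤ walkLength w p :=
  ciInf_le (bddBelow_range_walkLength w G u v) p

lemma exists_walkLength_eq_wdist [Finite V] (w : Sym2 V → ℝ≥0) (hG : G.Connected) (u v : V) :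
    ∃ p : G.Walk u v, walkLength w p = wdist w G u v := by
  have := Fintype.ofFinite V
  have : Nonempty (G.Path u v) := (hG u v).elim fun p ↦ ⟨p.toPath⟩
  obtain ⟨q, hq⟩ := Finite.exists_min fun q : G.Path u v ↦ walkLength w q.1
  have : Nonempty (G.Walk u v) := hG u v
  exact ⟨q.1, le_antisymm
    (le_ciInf fun p ↦ (hq p.toPath).trans (walkLength_bypass_le p)) (wdist_le_walkLength _)⟩

lemma wdist_nonneg : 0 ≤ wdist w G u v :=
  Real.iInf_nonneg (walkLength_nonneg w)

lemma wdist_self : wdist w G u u = 0 :=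
  le_antisymm (wdist_le_walkLength Walk.nil) wdist_nonneg

lemma wdist_le_of_adj (h : G.Adj u v) : wdist w G u v ≤ w s(u, v) := by
  simpa using wdist_le_walkLength (w := w) (Walk.nil.cons h)

lemma wdist_comm : wdist w G u v = wdist w G v u :=
  Function.Surjective.iInf_congr Walk.reverse (fun p ↦ ⟨p.reverse, p.reverse_reverse⟩)
    walkLength_reverse

lemma wdist_triangle (hG : G.Connected) (u v x : V) :
    wdist w G u x ≤ wdist w G u v + wdist w G v x := by
  have : Nonempty (G.Walk u v) := hG u v
  have : Nonempty (G.Walk v x) := hG v x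
  exact le_ciInf_add_ciInf fun p q ↦ walkLength_append (w := w) p q ▸ wdist_le_walkLength _

lemma wdist_mono (hG : G.Connected) (h : G ≤ H) : wdist w H u v ≤ wdist w G u v := by
  have : Nonempty (G.Walk u v) := hG u v
  exact le_ciInf fun p ↦ walkLength_mapLe (w := w) h p ▸ wdist_le_walkLength _

lemma wdist_add_wdist_le_walkLength (p : G.Walk u v) (hx : x ∈ p.support) :
    wdist w G u x + wdist w G x v ≤ walkLength w p := by
  rw [← p.take_spec hx, walkLength_append]
  exact add_le_add (wdist_le_walkLength _) (wdist_le_walkLength _)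

lemma wdist_le_mul_walkLength (hH : H.Connected) {C : ℝ} (p : G.Walk u v)
    (hp : ∀ d ∈ p.darts, wdist w H d.fst d.snd ≤ C * w d.edge) :
    wdist w H u v ≤ C * walkLength w p := by
  induction p with
  | nil => simp [wdist_self]
  | cons h p ih =>
    rw [Walk.darts_cons, List.forall_mem_cons] at hp
    rw [walkLength_cons, mul_add]
    exact (wdist_triangle hH _ _ _).trans (add_le_add hp.1 (ih hp.2))

lemma le_walkLength_of_mem_edges (p : G.Walk u v) {e : Sym2 V} (he : e ∈ p.edges) :
    (w e : ℝ) ≤ walkLength w p :=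
  List.single_le_sum (by simp) _ (List.mem_map_of_mem he)

lemma walkLength_eq_sum_getVert (p : G.Walk u v) :
    walkLength w p = ∑ i ∈ Finset.range p.length, (w s(p.getVert i, p.getVert (i + 1)) : ℝ) := by
  induction p with
  | nil => simp
  | cons h p ih =>
    rw [walkLength_cons, ih, Walk.length_cons, Finset.sum_range_succ', add_comm]
    simp

/-- The first `n + 1` vertices of the sequence `γ` form a shortest path of `G` starting at `u`. -/
structure IsGeodesic (w : Sym2 V → ℝ≥0) (G : SimpleGraph V) (u : V) (n : ℕ) (γ : ℕ → V) : Prop where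
  zero : γ 0 = u
  adj : ∀ i < n, G.Adj (γ i) (γ (i + 1))
  wdist_succ : ∀ i < n, wdist w G u (γ (i + 1)) = wdist w G u (γ i) + w s(γ i, γ (i + 1))

lemma exists_isGeodesic [Finite V] (w : Sym2 V → ℝ≥0) (hG : G.Connected) (u v : V) :
    ∃ n γ, IsGeodesic w G u n γ ∧ γ n = v := by
  obtain ⟨p, hp⟩ := exists_walkLength_eq_wdist w hG u v
  refine ⟨p.length, p.getVert, ⟨p.getVert_zero, fun i ↦ p.adj_getVert_succ, fun i hi ↦ ?_⟩,
    p.getVert_length⟩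
  have hstep : ∀ i ∈ Finset.range p.length,
      wdist w G u (p.getVert (i + 1)) - wdist w G u (p.getVert i) ≤
        w s(p.getVert i, p.getVert (i + 1)) := fun i hi ↦ by
    linarith [wdist_triangle (w := w) hG u (p.getVert i) (p.getVert (i + 1)),
      wdist_le_of_adj (w := w) (p.adj_getVert_succ (Finset.mem_range.1 hi))]
  have htotal : ∑ i ∈ Finset.range p.length,
      (wdist w G u (p.getVert (i + 1)) - wdist w G u (p.getVert i)) =
        ∑ i ∈ Finset.range p.length, (w s(p.getVert i, p.getVert (i + 1)) : ℝ) := by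
    rw [Finset.sum_range_sub (fun i ↦ wdist w G u (p.getVert i)), p.getVert_zero,
      p.getVert_length, wdist_self, ← walkLength_eq_sum_getVert, hp, sub_zero]
  linarith [(Finset.sum_eq_sum_iff_of_le hstep).1 htotal i (Finset.mem_range.2 hi)]

end WeightedDistance

section AddEdges

open SimpleGraph

variable {V : Type*} {G T : SimpleGraph V} {E E' : Set (Sym2 V)} {u v : V}

/-- The graph obtained from `T` by adding the edges in `E`. -/
def addEdges (T : SimpleGraph V) (E : Set (Sym2 V)) : SimpleGraph V :=
  T ⊔ fromEdgeSet E

lemma le_addEdges : T ≤ addEdges T E := le_sup_left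

lemma addEdges_mono (h : E ⊆ E') : addEdges T E ≤ addEdges T E' :=
  sup_le_sup_left (fromEdgeSet_mono h) T

lemma addEdges_le (hT : T ≤ G) (hE : E ⊆ G.edgeSet) : addEdges T E ≤ G :=
  sup_le hT fun _ _ h ↦ hE ((fromEdgeSet_adj _).1 h).1

lemma addEdges_adj (h : G.Adj u v) (huv : s(u, v) ∈ E) : (addEdges T E).Adj u v :=
  Or.inr ((fromEdgeSet_adj _).2 ⟨huv, h.ne⟩)

lemma mem_edgeSet_addEdges {e : Sym2 V} (he : e ∈ G.edgeSet) (heE : e ∈ E) :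
    e ∈ (addEdges T E).edgeSet := by
  induction e with
  | _ u v => exact addEdges_adj he heE

lemma addEdges_connected (hT : T.Connected) (E : Set (Sym2 V)) : (addEdges T E).Connected :=
  hT.mono le_addEdges

end AddEdges

section LineEmbedding

open SimpleGraph

open scoped NNReal

variable {V : Type*} {w : Sym2 V → ℝ≥0} {T : SimpleGraph V}

/-- `f` places the vertices of `S` in the interval `[0, M]` without shrinking any distance of
`T`. -/
structure IsLineEmbeddingOn (w : Sym2 V → ℝ≥0) (T : SimpleGraph V) (S : Set V) (M : ℝ)
    (f : V → ℝ) : Prop where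
  nonneg : ∀ u ∈ S, 0 ≤ f u
  le : ∀ u ∈ S, f u ≤ M
  wdist_le : ∀ u ∈ S, ∀ v ∈ S, wdist w T u v ≤ |f u - f v|

/-- Cuts the real line just after `c` and moves the right half `2 * h` further to the right. -/
noncomputable def openGap (c h x : ℝ) : ℝ :=
  if x ≤ c then x else x + 2 * h

lemma abs_sub_le_abs_openGap_sub {c h : ℝ} (hh : 0 ≤ h) (x y : ℝ) :
    |x - y| ≤ |openGap c h x - openGap c h y| := by
  unfold openGap
  grind

lemma abs_sub_add_le_abs_openGap_sub {c h : ℝ} (hh : 0 ≤ h) (x : ℝ) :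
    |x - c| + h ≤ |openGap c h x - (c + h)| := by
  unfold openGap
  grind

lemma openGap_mem_Icc {c h M x : ℝ} (hh : 0 ≤ h) (hx : x ∈ Set.Icc 0 M) :
    openGap c h x ∈ Set.Icc 0 (M + 2 * h) := by
  unfold openGap
  grind

lemma IsLineEmbeddingOn.exists_insert {S : Set V} {M : ℝ} {f : V → ℝ} {a b : V}
    (hT : T.Connected) (hf : IsLineEmbeddingOn w T S M f) (ha : a ∈ S) (hb : b ∉ S)
    (hab : T.Adj a b) :
    ∃ f', IsLineEmbeddingOn w T (insert b S) (M + 2 * w s(a, b)) f' := by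
  have hw : (0 : ℝ) ≤ w s(a, b) := NNReal.coe_nonneg _
  have hnew : ∀ v ∈ S, wdist w T v b ≤
      |openGap (f a) (w s(a, b)) (f v) - (f a + w s(a, b))| := fun v hv ↦
    calc wdist w T v b ≤ wdist w T v a + wdist w T a b := wdist_triangle hT v a b
      _ ≤ |f v - f a| + w s(a, b) := add_le_add (hf.wdist_le v hv a ha) (wdist_le_of_adj hab)
      _ ≤ _ := abs_sub_add_le_abs_openGap_sub hw _
  let f' := Function.update (fun v ↦ openGap (f a) (w s(a, b)) (f v)) b (f a + w s(a, b))
  have hf'b : f' b = f a + w s(a, b) := Function.update_self ..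
  have hf' : ∀ v ∈ S, f' v = openGap (f a) (w s(a, b)) (f v) := fun v hv ↦
    Function.update_of_ne (ne_of_mem_of_not_mem hv hb) ..
  have hmem : ∀ v ∈ insert b S, f' v ∈ Set.Icc 0 (M + 2 * w s(a, b)) := by
    rintro v (rfl | hv)
    · rw [hf'b]
      constructor <;> linarith [hf.nonneg a ha, hf.le a ha]
    · rw [hf' v hv]
      exact openGap_mem_Icc hw ⟨hf.nonneg v hv, hf.le v hv⟩
  refine ⟨f', fun v hv ↦ (hmem v hv).1, fun v hv ↦ (hmem v hv).2, ?_⟩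
  rintro u (rfl | hu) v (rfl | hv)
  · simp [wdist_self]
  · rw [hf'b, hf' v hv, wdist_comm, abs_sub_comm]
    exact hnew v hv
  · rw [hf'b, hf' u hu]
    exact hnew u hu
  · rw [hf' u hu, hf' v hv]
    exact (hf.wdist_le u hu v hv).trans (abs_sub_le_abs_openGap_sub hw _ _)

/-- The total weight of the edges of `T` with both endpoints in `S`. -/
noncomputable def inducedWeight [Fintype V] (w : Sym2 V → ℝ≥0) (T : SimpleGraph V) (S : Set V) :
    ℝ :=
  ∑ e ∈ T.edgeFinset.filter fun e : Sym2 V ↦ (e : Set V) ⊆ S, (w e : ℝ)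

lemma inducedWeight_univ [Fintype V] :
    inducedWeight w T Set.univ = ∑ e ∈ T.edgeFinset, (w e : ℝ) := by
  simp [inducedWeight]

lemma inducedWeight_add_le_inducedWeight_insert [Fintype V] (w : Sym2 V → ℝ≥0) {S : Set V}
    {a b : V} (ha : a ∈ S) (hb : b ∉ S) (hab : T.Adj a b) :
    inducedWeight w T S + w s(a, b) ≤ inducedWeight w T (insert b S) := by
  have hnew : s(a, b) ∉ T.edgeFinset.filter fun e : Sym2 V ↦ (e : Set V) ⊆ S := by
    simp [Set.insert_subset_iff, hb]
  rw [inducedWeight, add_comm, ← Finset.sum_insert (f := fun e ↦ (w e : ℝ)) hnew]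
  refine Finset.sum_le_sum_of_subset_of_nonneg (fun e ↦ ?_) (by simp)
  rw [Finset.mem_insert, Finset.mem_filter, Finset.mem_filter, mem_edgeFinset]
  rintro (rfl | ⟨he, heS⟩)
  · exact ⟨hab, by simp [Set.insert_subset_iff, ha]⟩
  · exact ⟨he, heS.trans (Set.subset_insert b S)⟩

lemma exists_isLineEmbeddingOn_univ [Fintype V] (w : Sym2 V → ℝ≥0) (hT : T.Connected) :
    ∃ f, IsLineEmbeddingOn w T Set.univ (2 * ∑ e ∈ T.edgeFinset, (w e : ℝ)) f := by
  let embeddable : Set (Set V) :=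
    {S | S.Nonempty ∧ ∃ f, IsLineEmbeddingOn w T S (2 * inducedWeight w T S) f}
  obtain ⟨r⟩ := hT.nonempty
  have hr : {r} ∈ embeddable := by
    refine ⟨Set.singleton_nonempty r, fun _ ↦ 0, by simp, fun _ _ ↦ ?_, by simp [wdist_self]⟩
    exact mul_nonneg zero_le_two (Finset.sum_nonneg (by simp))
  obtain ⟨S, ⟨⟨s, hs⟩, f, hf⟩, hmax⟩ := (Set.toFinite embeddable).exists_maximal ⟨_, hr⟩
  obtain rfl : S = Set.univ := by
    by_contra hS
    obtain ⟨y, hy⟩ := (Set.ne_univ_iff_exists_notMem S).1 hS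
    obtain ⟨p⟩ := hT s y
    obtain ⟨⟨⟨a, b⟩, hab⟩, -, ha, hb⟩ := p.exists_boundary_dart S hs hy
    obtain ⟨f', hf'⟩ := hf.exists_insert hT ha hb hab
    have hweight := inducedWeight_add_le_inducedWeight_insert w ha hb hab
    exact hb (hmax ⟨Set.insert_nonempty b S, f', hf'.nonneg, fun v hv ↦ by
      linarith [hf'.le v hv], hf'.wdist_le⟩ (Set.subset_insert b S) (Set.mem_insert b S))
  exact ⟨f, inducedWeight_univ (w := w) ▸ hf⟩

end LineEmbedding

section HittingSets

open Finset

variable {α β ι : Type*} {U : Finset α} {I : Finset ι} {A : ι → Finset α} {p q t : ℕ}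

lemma exists_card_div_le_card_filter_mem (hp : 0 < p) (hq : 0 < q) (hU : #U ≤ p * q)
    (hI : I.Nonempty) (hA : ∀ i ∈ I, A i ⊆ U ∧ q ≤ #(A i)) :
    ∃ x ∈ U, (#I : ℝ) / p ≤ #{i ∈ I | x ∈ A i} := by
  by_contra! hfew
  obtain ⟨i, hi⟩ := hI
  have hne : U.Nonempty := (card_pos.1 (hq.trans_le (hA i hi).2)).mono (hA i hi).1
  have hcount := card_nsmul_lt_card_nsmul_of_le_of_lt (R := ℝ) (fun i x ↦ x ∈ A i) hne
    (m := q) (fun i hi ↦ ?_) hfew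
  · have hU' : (#U : ℝ) ≤ p * q := mod_cast hU
    have hp' : (0 : ℝ) < p := mod_cast hp
    rw [nsmul_eq_mul, nsmul_eq_mul, mul_div_assoc', lt_div_iff₀ hp'] at hcount
    nlinarith [Nat.cast_nonneg (α := ℝ) #I]
  · rw [bipartiteAbove, filter_mem_eq_inter, inter_eq_right.2 (hA i hi).1]
    exact mod_cast (hA i hi).2

lemma exists_card_le_card_filter_disjoint_le (hp : 0 < p) (hq : 0 < q) (hU : #U ≤ p * q)
    (hA : ∀ i ∈ I, A i ⊆ U ∧ q ≤ #(A i)) (k : ℕ) :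
    ∃ R ⊆ U, #R ≤ k ∧ (#{i ∈ I | Disjoint R (A i)} : ℝ) ≤ #I * (1 - 1 / p) ^ k := by
  have hfactor : (0 : ℝ) ≤ 1 - 1 / p := sub_nonneg.2 (by simpa using Nat.cast_inv_le_one p)
  induction k with
  | zero => exact ⟨∅, by simp⟩
  | succ k ih =>
    obtain ⟨R, hRU, hRk, hR⟩ := ih
    set J := {i ∈ I | Disjoint R (A i)} with hJ
    obtain hJempty | hJne := J.eq_empty_or_nonempty
    · refine ⟨R, hRU, by lia, ?_⟩
      rw [← hJ, hJempty, card_empty, Nat.cast_zero]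
      positivity
    obtain ⟨x, hxU, hx⟩ := exists_card_div_le_card_filter_mem hp hq hU hJne
      fun i hi ↦ hA i (mem_of_mem_filter i hi)
    refine ⟨insert x R, insert_subset hxU hRU, (card_insert_le x R).trans (by lia), ?_⟩
    have hsub : {i ∈ I | Disjoint (insert x R) (A i)} ⊆ {i ∈ J | x ∉ A i} := fun i ↦ by
      simp +contextual [hJ, disjoint_insert_left]
    have hsplit : (#{i ∈ J | x ∈ A i} : ℝ) + #{i ∈ J | x ∉ A i} = #J :=
      mod_cast card_filter_add_card_filter_not _
    calc (#{i ∈ I | Disjoint (insert x R) (A i)} : ℝ) ≤ #{i ∈ J | x ∉ A i} :=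
          mod_cast card_le_card hsub
      _ ≤ #J * (1 - 1 / p) := by rw [mul_one_sub, mul_one_div]; linarith
      _ ≤ #I * (1 - 1 / p) ^ k * (1 - 1 / p) := by gcongr
      _ = #I * (1 - 1 / p) ^ (k + 1) := by ring

lemma one_sub_one_div_pow_le_half (hp : 0 < p) : (1 - 1 / p : ℝ) ^ p ≤ 1 / 2 :=
  (Real.one_sub_div_pow_le_exp_neg (mod_cast hp)).trans Real.exp_neg_one_lt_half.le

lemma exists_hitting_set (hp : 0 < p) (hq : 0 < q) (hU : #U ≤ p * q) (hI : #I < 2 ^ t)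
    (hA : ∀ i ∈ I, A i ⊆ U ∧ q ≤ #(A i)) :
    ∃ R ⊆ U, #R ≤ p * t ∧ ∀ i ∈ I, ¬Disjoint R (A i) := by
  obtain ⟨R, hRU, hRcard, hR⟩ := exists_card_le_card_filter_disjoint_le hp hq hU hA (p * t)
  refine ⟨R, hRU, hRcard, filter_eq_empty_iff.1 (card_eq_zero.1 (Nat.lt_one_iff.1 ?_))⟩
  rify
  calc (#{i ∈ I | Disjoint R (A i)} : ℝ) ≤ #I * ((1 - 1 / p) ^ p) ^ t := by rwa [← pow_mul]
    _ ≤ #I * (1 / 2) ^ t := by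
      gcongr
      · exact pow_nonneg (sub_nonneg.2 (by simpa using Nat.cast_inv_le_one p)) p
      · exact one_sub_one_div_pow_le_half hp
    _ < 2 ^ t * (1 / 2) ^ t := by gcongr; exact mod_cast hI
    _ = 1 := by rw [← mul_pow]; norm_num

lemma exists_hitting_set_of_image [Fintype α] [DecidableEq β] {κ : α → β} (hp : 0 < p) (hq : 0 < q)
    (hU : #(univ.image κ) ≤ p * q) (hI : #I < 2 ^ t)
    (hA : ∀ i ∈ I, q ≤ #((A i).image κ)) :
    ∃ R : Finset α, #R ≤ p * t ∧ ∀ i ∈ I, ∃ r ∈ R, ∃ x ∈ A i, κ x = κ r := by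
  obtain ⟨K, hK, hKcard, hhit⟩ := exists_hitting_set hp hq hU hI
    fun i hi ↦ ⟨image_subset_image (subset_univ _), hA i hi⟩
  obtain ⟨R, -, hinj, rfl⟩ := exists_subset_injOn_image_eq_of_surjOn (f := κ) Set.univ K
    fun b hb ↦ by simpa using hK hb
  refine ⟨R, (card_image_of_injOn hinj) ▸ hKcard, fun i hi ↦ ?_⟩
  obtain ⟨b, hbR, hbA⟩ := not_disjoint_iff.1 (hhit i hi)
  obtain ⟨r, hr, rfl⟩ := mem_image.1 hbR
  obtain ⟨x, hx, hxr⟩ := mem_image.1 hbA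
  exact ⟨r, hr, x, hx, hxr⟩

end HittingSets

section Cells

open Finset

variable {V : Type*} {f : V → ℝ} {ρ σ M : ℝ} {u v : V}

/-- The index of the cell containing `f v` when the line is cut into cells of length `ρ`. -/
noncomputable def cell (f : V → ℝ) (ρ : ℝ) (v : V) : ℤ :=
  ⌊f v / ρ⌋

/-- The position of `f v` relative to the left end of its cell of length `ρ`. -/
noncomputable def cellOffset (f : V → ℝ) (ρ : ℝ) (v : V) : ℝ :=
  Int.fract (f v / ρ) * ρ

lemma cellOffset_mem_Icc (hρ : 0 < ρ) (v : V) : cellOffset f ρ v ∈ Set.Icc 0 ρ :=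
  ⟨mul_nonneg (Int.fract_nonneg _) hρ.le,
    mul_le_of_le_one_left hρ.le (Int.fract_lt_one _).le⟩

lemma abs_sub_le_of_cell_eq (hρ : 0 < ρ) (h : cell f ρ u = cell f ρ v) : |f u - f v| ≤ ρ := by
  have := Int.abs_sub_lt_one_of_floor_eq_floor h
  rw [← sub_div, abs_div, abs_of_pos hρ, div_lt_one hρ] at this
  exact this.le

lemma abs_sub_le_of_cell_cellOffset_eq (hρ : 0 < ρ) (hσ : 0 < σ) (h : cell f ρ u = cell f ρ v)
    (hfine : cell (cellOffset f ρ) σ u = cell (cellOffset f ρ) σ v) : |f u - f v| ≤ σ := by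
  have hsplit (v : V) : f v = cell f ρ v * ρ + cellOffset f ρ v := by
    rw [cell, cellOffset, ← add_mul, Int.floor_add_fract, div_mul_cancel₀ _ hρ.ne']
  rw [hsplit u, hsplit v, h, add_sub_add_left_eq_sub]
  exact abs_sub_le_of_cell_eq hσ hfine

lemma card_image_cell_le [Fintype V] (hρ : 0 < ρ) (hM : 0 ≤ M) (hf : ∀ v, f v ∈ Set.Icc 0 M) :
    (#(univ.image (cell f ρ)) : ℝ) ≤ M / ρ + 1 := by
  have hsub : univ.image (cell f ρ) ⊆ (range (⌊M / ρ⌋₊ + 1)).image Nat.cast := by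
    refine image_subset_iff.2 fun v _ ↦ mem_image.2 ⟨⌊f v / ρ⌋₊, ?_, ?_⟩
    · have : f v / ρ ≤ M / ρ := by gcongr; exact (hf v).2
      exact mem_range_succ_iff.2 (Nat.floor_mono this)
    · exact Int.natCast_floor_eq_floor (div_nonneg (hf v).1 hρ.le)
  calc (#(univ.image (cell f ρ)) : ℝ) ≤ ⌊M / ρ⌋₊ + 1 :=
        mod_cast (card_le_card hsub).trans (card_image_le.trans (card_range _).le)
    _ ≤ M / ρ + 1 := by gcongr; exact Nat.floor_le (by positivity)

end Cells

section ColorCounting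

open Finset

variable {κ : Type*} [DecidableEq κ] {a : ℕ → ℝ} {c : ℕ → κ} {m p : ℕ} {W : ℝ}

lemma le_add_mul_card_image_of_step_le (hmp : m ≤ p) (hW : 0 ≤ W)
    (hstep : ∀ i ∈ Ico m p, a (i + 1) ≤ a i + W)
    (hcolor : ∀ i ∈ Ioc m p, ∀ j ∈ Ioc m p, i ≤ j → c i = c j → a j ≤ a i + W) :
    a p ≤ a m + 2 * W * #((Ioc m p).image c) := by
  induction p using Nat.strong_induction_on with
  | _ p ih =>
  obtain rfl | hlt := hmp.eq_or_lt
  · simp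
  -- Jump back from `p` to just before the first index of its color, which then disappears.
  obtain ⟨j, hj, hjmin⟩ := exists_min_image ({i ∈ Ioc m p | c i = c p}) id
    ⟨p, by simp [hlt]⟩
  obtain ⟨k, rfl⟩ : ∃ k, j = k + 1 := Nat.exists_eq_add_one.2 (by grind)
  simp only [mem_filter, mem_Ioc, id] at hj hjmin
  obtain ⟨⟨hmk, hkp⟩, hck⟩ := hj
  have hnew : c p ∉ (Ioc m k).image c := by
    simp only [mem_image, mem_Ioc, not_exists, not_and]
    exact fun i hi hci ↦ by have := hjmin i ⟨⟨hi.1, by lia⟩, hci⟩; lia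
  have hcard : #((Ioc m k).image c) + 1 ≤ #((Ioc m p).image c) := by
    rw [← card_insert_of_notMem hnew]
    refine card_le_card (insert_subset ?_ (image_subset_image (Ioc_subset_Ioc_right (by lia))))
    exact mem_image_of_mem c (by simp [hlt])
  have hcard' : (#((Ioc m k).image c) : ℝ) + 1 ≤ #((Ioc m p).image c) := mod_cast hcard
  calc a p ≤ a (k + 1) + W := hcolor _ (by grind) _ (by simp [hlt]) hkp hck
    _ ≤ a k + W + W := by gcongr; exact hstep k (by grind)
    _ ≤ a m + 2 * W * #((Ioc m k).image c) + W + W := by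
      gcongr
      exact ih k (by lia) (by lia) (fun i hi ↦ hstep i (by grind))
        fun i hi j hj ↦ hcolor i (by grind) j (by grind)
    _ = a m + 2 * W * (#((Ioc m k).image c) + 1) := by ring
    _ ≤ a m + 2 * W * #((Ioc m p).image c) := by gcongr

lemma wdist_le_mul_card_image_cell {V : Type*} {G : SimpleGraph V} {w : Sym2 V → NNReal}
    (hG : G.Connected) {f : V → ℝ} (hf : ∀ u v, wdist w G u v ≤ |f u - f v|) {ρ : ℝ} (hρ : 0 < ρ)
    (hρW : ρ ≤ W) {s t : V} (p : G.Walk s t) (hp : ∀ e ∈ p.edges, (w e : ℝ) ≤ W) :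
    wdist w G s t ≤ 2 * W * #(p.support.toFinset.image (cell f ρ)) := by
  have hcount := le_add_mul_card_image_of_step_le (a := fun i ↦ wdist w G s (p.getVert i))
    (c := fun i ↦ cell f ρ (p.getVert i)) p.length.zero_le (hρ.le.trans hρW) ?_ ?_
  · rw [p.getVert_zero, p.getVert_length, wdist_self, zero_add] at hcount
    refine hcount.trans (mul_le_mul_of_nonneg_left ?_ (by linarith))
    exact mod_cast card_le_card (image_subset_iff.2 fun i _ ↦
      mem_image_of_mem _ (List.mem_toFinset.2 (p.getVert_mem_support i)))
  · intro i hi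
    have hadj := p.adj_getVert_succ (mem_Ico.1 hi).2
    have hmem : s(p.getVert i, p.getVert (i + 1)) ∈ p.edges :=
      p.mk_mem_edges_iff_exists.2 ⟨i, (mem_Ico.1 hi).2, rfl⟩
    refine (wdist_triangle hG s (p.getVert i) _).trans ?_
    gcongr
    exact (wdist_le_of_adj hadj).trans (hp _ hmem)
  · intro i _ j _ _ hij
    refine (wdist_triangle hG s (p.getVert i) _).trans ?_
    gcongr
    exact (hf _ _).trans ((abs_sub_le_of_cell_eq hρ hij).trans hρW)

end ColorCounting

section LightGraph

open SimpleGraph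

open scoped NNReal

variable {V : Type*} {G T : SimpleGraph V} {w : Sym2 V → ℝ≥0} {W W' : ℝ} {u v : V}

/-- The edges of `G` of weight at most `W`. -/
def lightEdges (w : Sym2 V → ℝ≥0) (G : SimpleGraph V) (W : ℝ) : Set (Sym2 V) :=
  {e | e ∈ G.edgeSet ∧ (w e : ℝ) ≤ W}

/-- The spanning subgraph of `G` whose edges are those of `T` and those of weight at most `W`. -/
def lightGraph (w : Sym2 V → ℝ≥0) (T G : SimpleGraph V) (W : ℝ) : SimpleGraph V :=
  addEdges T (lightEdges w G W)

lemma lightGraph_le (hTG : T ≤ G) : lightGraph w T G W ≤ G :=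
  addEdges_le hTG fun _ h ↦ h.1

lemma lightGraph_mono (h : W ≤ W') : lightGraph w T G W ≤ lightGraph w T G W' :=
  addEdges_mono fun _ he ↦ ⟨he.1, he.2.trans h⟩

lemma lightGraph_adj (h : G.Adj u v) (hW : w s(u, v) ≤ W) : (lightGraph w T G W).Adj u v :=
  addEdges_adj h ⟨h, hW⟩

lemma le_of_mem_edgeSet_lightGraph {e : Sym2 V} (he : e ∈ (lightGraph w T G W).edgeSet)
    (heT : e ∉ T.edgeSet) : w e ≤ W := by
  rw [lightGraph, addEdges, edgeSet_sup, edgeSet_fromEdgeSet] at he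
  exact (he.resolve_left heT).1.2

lemma lightGraph_connected (hT : T.Connected) : (lightGraph w T G W).Connected :=
  addEdges_connected hT _

end LightGraph

section Sparsification

open Finset SimpleGraph

open scoped NNReal

lemma exists_min_representatives {α β : Type*} [DecidableEq β] (P : Finset α) (key : α → β)
    (g : α → ℝ) :
    ∃ F ⊆ P, #F = #(P.image key) ∧ ∀ x ∈ P, ∃ y ∈ F, key y = key x ∧ g y ≤ g x := by
  have hsurj : Set.SurjOn key {y | y ∈ P ∧ ∀ x ∈ P, key x = key y → g y ≤ g x}
      (P.image key) := by
    intro b hb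
    obtain ⟨x, hx, rfl⟩ := mem_image.1 hb
    obtain ⟨y, hy, hmin⟩ := exists_min_image {z ∈ P | key z = key x} g ⟨x, by simp [hx]⟩
    rw [mem_filter] at hy
    exact ⟨y, ⟨hy.1, fun z hz hzy ↦ hmin z (by simp [hz, hzy, hy.2])⟩, hy.2⟩
  obtain ⟨F, hF, hinj, himage⟩ := exists_subset_injOn_image_eq_of_surjOn _ _ hsurj
  refine ⟨F, fun y hy ↦ (hF hy).1, by rw [← himage, card_image_of_injOn hinj], fun x hx ↦ ?_⟩
  obtain ⟨y, hy, hyx⟩ := mem_image.1 (himage ▸ mem_image_of_mem key hx)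
  exact ⟨y, hy, hyx, (hF hy).2 x hx hyx.symm⟩

variable {V β γ : Type*} [Fintype V] [DecidableEq β] [DecidableEq γ] {G : SimpleGraph V}
  {w : Sym2 V → ℝ≥0} {κ : V → β} {φ : V → γ} {p q k t : ℕ}

/-- The heads of the edges that are no heavier than `s(u, v)` and whose tail has the same key as
`u`. -/
noncomputable def lighterHeads (w : Sym2 V → ℝ≥0) (G : SimpleGraph V) (κ : V → β) (u v : V) :
    Finset V :=
  {v' | ∃ u', G.Adj u' v' ∧ w s(u', v') ≤ w s(u, v) ∧ κ u' = κ u}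

lemma card_image_key_pairs_le (P : Finset (V × V)) (hP : ∀ e ∈ P, G.Adj e.1 e.2)
    (hq : ∀ e ∈ P, #((lighterHeads w G κ e.1 e.2).image κ) < q) :
    #(P.image fun e ↦ (κ e.1, κ e.2)) ≤ #(univ.image κ) * q := by
  rw [mul_comm]
  refine card_le_mul_card_image_of_maps_to (f := Prod.fst) (fun c hc ↦ ?_) q fun b _ ↦ ?_
  · obtain ⟨e, -, rfl⟩ := mem_image.1 hc
    exact mem_image_of_mem κ (mem_univ e.1)
  rw [filter_image]
  obtain hempty | hne := ({e ∈ P | κ e.1 = b}).eq_empty_or_nonempty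
  · simp [hempty]
  -- The heads of all edges leaving the class `b` are lighter heads of the heaviest such edge.
  obtain ⟨e₀, he₀, hmax⟩ := exists_max_image _ (fun e ↦ w s(e.1, e.2)) hne
  rw [mem_filter] at he₀
  have hsub : ({e ∈ P | κ e.1 = b}.image fun e ↦ (κ e.1, κ e.2)) ⊆
      ((lighterHeads w G κ e₀.1 e₀.2).image κ).image (Prod.mk b) := by
    refine image_subset_iff.2 fun e he ↦ ?_
    have hle := hmax e he
    obtain ⟨heP, rfl⟩ := mem_filter.1 he
    refine mem_image_of_mem _ (mem_image_of_mem κ (mem_filter.2 ⟨mem_univ _, e.1, ?_⟩))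
    exact ⟨hP e heP, hle, he₀.2.symm⟩
  exact (card_le_card hsub).trans (card_image_le.trans (hq e₀ he₀.1).le)

lemma card_image_keys_le (P : Finset (V × V)) (hφ : #(univ.image φ) ≤ k) :
    #(P.image fun e ↦ ((κ e.1, κ e.2), φ e.1, φ e.2)) ≤
      #(P.image fun e ↦ (κ e.1, κ e.2)) * k ^ 2 := by
  have hsub : (P.image fun e ↦ ((κ e.1, κ e.2), φ e.1, φ e.2)) ⊆
      (P.image fun e ↦ (κ e.1, κ e.2)) ×ˢ univ.image φ ×ˢ univ.image φ :=
    image_subset_iff.2 fun e he ↦ by simp [mem_image_of_mem (fun e ↦ (κ e.1, κ e.2)) he]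
  refine (card_le_card hsub).trans ?_
  rw [card_product, card_product, sq]
  gcongr

lemma exists_hubs_and_representatives (w : Sym2 V → ℝ≥0) (G : SimpleGraph V) (W : ℝ)
    (hp : 0 < p) (hq : 0 < q) (hκ : #(univ.image κ) ≤ p * q) (hφ : #(univ.image φ) ≤ k)
    (ht : Fintype.card V ^ 2 < 2 ^ t) :
    ∃ (F : Finset (Sym2 V)) (R : Finset V), ↑F ⊆ lightEdges w G W ∧
      #F ≤ #(univ.image κ) * q * k ^ 2 ∧ #R ≤ p * t ∧
      ∀ u v, G.Adj u v → w s(u, v) ≤ W →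
        (∃ r ∈ R, ∃ u' v', G.Adj u' v' ∧ w s(u', v') ≤ w s(u, v) ∧ κ u' = κ u ∧ κ v' = κ r) ∨
        ∃ u' v', s(u', v') ∈ F ∧ w s(u', v') ≤ w s(u, v) ∧
          κ u' = κ u ∧ φ u' = φ u ∧ κ v' = κ v ∧ φ v' = φ v := by
  let I : Finset (V × V) := {e | q ≤ #((lighterHeads w G κ e.1 e.2).image κ)}
  let P : Finset (V × V) :=
    {e | G.Adj e.1 e.2 ∧ w s(e.1, e.2) ≤ W ∧ #((lighterHeads w G κ e.1 e.2).image κ) < q}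
  obtain ⟨R, hR, hhit⟩ := exists_hitting_set_of_image (κ := κ) (t := t)
    (A := fun e : V × V ↦ lighterHeads w G κ e.1 e.2) hp hq hκ (I := I)
    ((card_le_univ I).trans_lt (by rwa [Fintype.card_prod, ← sq])) (by simp [I])
  obtain ⟨F, hFP, hF, hrep⟩ := exists_min_representatives P
    (fun e ↦ ((κ e.1, κ e.2), φ e.1, φ e.2)) (fun e ↦ w s(e.1, e.2))
  refine ⟨F.image fun e ↦ s(e.1, e.2), R, ?_, ?_, hR, fun u v huv hW ↦ ?_⟩
  · rw [coe_image, Set.image_subset_iff]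
    intro e he
    obtain ⟨hadj, hle, -⟩ := by simpa [P] using hFP he
    exact ⟨hadj, hle⟩
  · refine card_image_le.trans (hF.le.trans ((card_image_keys_le P hφ).trans ?_))
    gcongr
    exact card_image_key_pairs_le P (fun e he ↦ (mem_filter.1 he).2.1)
      fun e he ↦ (mem_filter.1 he).2.2.2
  · obtain hmany | hfew := le_or_gt q #((lighterHeads w G κ u v).image κ)
    · obtain ⟨r, hr, v', hv', hκr⟩ := hhit (u, v) (by simpa [I] using hmany)
      obtain ⟨u', hadj, hle, hu'⟩ := by simpa [lighterHeads] using hv'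
      exact .inl ⟨r, hr, u', v', hadj, hle, hu', hκr⟩
    · obtain ⟨e, he, hkey, hle⟩ := hrep (u, v) (by simp [P, huv, hW, hfew])
      simp only [Prod.mk.injEq] at hkey
      exact .inr ⟨e.1, e.2, mem_image_of_mem _ he, by exact_mod_cast hle,
        hkey.1.1, hkey.2.1, hkey.1.2, hkey.2.2⟩

end Sparsification

section Hubs

open Finset SimpleGraph

open scoped NNReal

variable {V : Type*} {G T : SimpleGraph V} {w : Sym2 V → ℝ≥0} {f : V → ℝ} {M W : ℝ} {a t : ℕ}

/-- The hub `r` can be reached from `z` within distance `3 / 2 * ω` using only edges of `T` and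
edges of weight at most `ω`. -/
def IsNearHub (w : Sym2 V → ℝ≥0) (T G : SimpleGraph V) (ω : ℝ) (r z : V) : Prop :=
  wdist w (lightGraph w T G ω) r z ≤ 3 / 2 * ω

lemma IsNearHub.mono (hT : T.Connected) {ω ω' : ℝ} {r z : V} (h : IsNearHub w T G ω r z)
    (hω : ω ≤ ω') : IsNearHub w T G ω' r z := by
  calc wdist w (lightGraph w T G ω') r z
      ≤ wdist w (lightGraph w T G ω) r z :=
        wdist_mono (lightGraph_connected hT) (lightGraph_mono hω)
    _ ≤ 3 / 2 * ω := h
    _ ≤ 3 / 2 * ω' := by gcongr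

lemma sum_le_card_mul_of_subset_lightEdges {F : Finset (Sym2 V)} (hF : ↑F ⊆ lightEdges w G W) :
    ∑ e ∈ F, (w e : ℝ) ≤ #F * W := by
  simpa using sum_le_card_nsmul F (fun e ↦ (w e : ℝ)) W fun e he ↦ (hF he).2

lemma wdist_lightGraph_le_of_adj (hT : T.Connected) {ρ ω : ℝ} {r u u' v' : V}
    (hadj : G.Adj u' v') (hω : w s(u', v') ≤ ω) (hu : wdist w T u' u ≤ ρ)
    (hr : wdist w T v' r ≤ ρ) : wdist w (lightGraph w T G ω) r u ≤ ω + 2 * ρ := by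
  have hL := lightGraph_connected (w := w) (G := G) (W := ω) hT
  have hTL : T ≤ lightGraph w T G ω := le_addEdges
  rw [wdist_comm] at hr
  calc wdist w (lightGraph w T G ω) r u
      ≤ wdist w (lightGraph w T G ω) r v' + (wdist w (lightGraph w T G ω) v' u' +
          wdist w (lightGraph w T G ω) u' u) :=
        (wdist_triangle hL r v' u).trans (by gcongr; exact wdist_triangle hL v' u' u)
    _ ≤ ρ + (ω + ρ) := by
      gcongr
      · exact (wdist_mono hT hTL).trans hr
      · rw [wdist_comm]
        exact (wdist_le_of_adj (lightGraph_adj hadj hω)).trans hω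
      · exact (wdist_mono hT hTL).trans hu
    _ = ω + 2 * ρ := by ring

lemma wdist_addEdges_le_of_mem (hT : T.Connected) {E : Set (Sym2 V)} {σ : ℝ} {u v u' v' : V}
    (hadj : G.Adj u' v') (hE : s(u', v') ∈ E) (hu : wdist w T u' u ≤ σ)
    (hv : wdist w T v' v ≤ σ) : wdist w (addEdges T E) u v ≤ w s(u', v') + 2 * σ := by
  have hH := addEdges_connected hT E
  rw [wdist_comm] at hu
  calc wdist w (addEdges T E) u v
      ≤ wdist w (addEdges T E) u u' + (wdist w (addEdges T E) u' v' +
          wdist w (addEdges T E) v' v) :=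
        (wdist_triangle hH u u' v).trans (by gcongr; exact wdist_triangle hH u' v' v)
    _ ≤ σ + (w s(u', v') + σ) := by
      gcongr
      · exact (wdist_mono hT le_addEdges).trans hu
      · exact wdist_le_of_adj (addEdges_adj hadj hE)
      · exact (wdist_mono hT le_addEdges).trans hv
    _ = w s(u', v') + 2 * σ := by ring

variable [Fintype V]

lemma exists_hubs_and_detours {β γ : Type*} [DecidableEq β] [DecidableEq γ] {κ : V → β}
    {φ : V → γ} {p q k : ℕ} {ρ σ : ℝ} (G : SimpleGraph V) (W : ℝ) (hT : T.Connected)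
    (hp : 0 < p) (hq : 0 < q) (hκ : #(univ.image κ) ≤ p * q) (hφ : #(univ.image φ) ≤ k)
    (ht : Fintype.card V ^ 2 < 2 ^ t) (hρ : ∀ u v, κ u = κ v → wdist w T u v ≤ ρ)
    (hσ : ∀ u v, κ u = κ v → φ u = φ v → wdist w T u v ≤ σ) :
    ∃ (F : Finset (Sym2 V)) (R : Finset V), ↑F ⊆ lightEdges w G W ∧
      #F ≤ #(univ.image κ) * q * k ^ 2 ∧ #R ≤ p * t ∧
      ∀ u v, G.Adj u v → w s(u, v) ≤ W →
        (∃ r ∈ R, wdist w (lightGraph w T G (w s(u, v))) r u ≤ w s(u, v) + 2 * ρ) ∨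
        wdist w (addEdges T F) u v ≤ w s(u, v) + 2 * σ := by
  obtain ⟨F, R, hF, hFcard, hR, hFR⟩ := exists_hubs_and_representatives w G W hp hq hκ hφ ht
  refine ⟨F, R, hF, hFcard, hR, fun u v huv hW ↦ ?_⟩
  obtain ⟨r, hr, u', v', hadj, hle, hu, hv⟩ | ⟨u', v', hmem, hle, hu, hu', hv, hv'⟩ :=
    hFR u v huv hW
  · exact .inl ⟨r, hr, wdist_lightGraph_le_of_adj hT hadj (mod_cast hle) (hρ _ _ hu) (hρ _ _ hv)⟩
  · right
    calc wdist w (addEdges T F) u v ≤ w s(u', v') + 2 * σ :=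
          wdist_addEdges_le_of_mem hT (hF hmem).1 hmem (hσ _ _ hu hu') (hσ _ _ hv hv')
      _ ≤ w s(u, v) + 2 * σ := by gcongr

lemma exists_hubs_of_light_edges (G : SimpleGraph V) (hT : T.Connected) (hM : 0 ≤ M) (ha : 0 < a)
    (hn : Fintype.card V ≤ a ^ 5) (ht : Fintype.card V ^ 2 < 2 ^ t) :
    ∃ (F : Finset (Sym2 V)) (R : Finset V), ↑F ⊆ G.edgeSet ∧ ∑ e ∈ F, (w e : ℝ) ≤ a ^ 3 * M ∧
      #R ≤ a ^ 3 * t ∧ ∀ u v, G.Adj u v → w s(u, v) ≤ M / a ^ 4 →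
        (∃ r ∈ R, IsNearHub w T G (w s(u, v)) r u) ∨
        wdist w (addEdges T F) u v ≤ w s(u, v) := by
  obtain ⟨F, R, hF, hFcard, hR, hFR⟩ := exists_hubs_and_detours (κ := id) (φ := fun _ : V ↦ ())
    (p := a ^ 3) (q := a ^ 2) (k := 1) (ρ := 0) (σ := 0) (w := w) G (M / a ^ 4) hT (by positivity)
    (by positivity) (by simpa [← pow_add] using hn) (card_le_univ _) ht
    (by simp [wdist_self]) (by simp +contextual [wdist_self])
  refine ⟨F, R, hF.trans fun _ he ↦ he.1, ?_, hR, fun u v huv hW ↦ ?_⟩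
  · have hcard : (#F : ℝ) ≤ a ^ 5 * a ^ 2 := by
      rw [image_id, card_univ, one_pow, mul_one] at hFcard
      exact mod_cast hFcard.trans (Nat.mul_le_mul_right _ hn)
    calc ∑ e ∈ F, (w e : ℝ) ≤ #F * (M / a ^ 4) := sum_le_card_mul_of_subset_lightEdges hF
      _ ≤ a ^ 5 * a ^ 2 * (M / a ^ 4) := by gcongr
      _ = a ^ 3 * M := by field
  · refine (hFR u v huv hW).imp ?_ (by simp)
    rintro ⟨r, hr, h⟩
    have := NNReal.coe_nonneg (w s(u, v))
    exact ⟨r, hr, h.trans (by linarith)⟩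

lemma card_image_cell_eighth_le (hW : 0 < W) (hWM : W ≤ 2 * M)
    (hf : ∀ v, f v ∈ Set.Icc 0 M) : (#(univ.image (cell f (W / 8))) : ℝ) ≤ 10 * M / W := by
  calc (#(univ.image (cell f (W / 8))) : ℝ) ≤ M / (W / 8) + 1 :=
        card_image_cell_le (by positivity) (by linarith) hf
    _ ≤ M / (W / 8) + 2 * M / W := by gcongr; exact (one_le_div hW).2 hWM
    _ = 10 * M / W := by ring

lemma exists_hubs_of_heavy_edges (G : SimpleGraph V) (hT : T.Connected)
    (hf : ∀ v, f v ∈ Set.Icc 0 M) (hTf : ∀ u v, wdist w T u v ≤ |f u - f v|) (hM : 0 < M)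
    (ha : 0 < a) (ht : Fintype.card V ^ 2 < 2 ^ t) (hW : M / a ^ 4 ≤ W) (hWM : W ≤ 2 * M) :
    ∃ (F : Finset (Sym2 V)) (R : Finset V), ↑F ⊆ G.edgeSet ∧
      ∑ e ∈ F, (w e : ℝ) ≤ 40 * a ^ 3 * M ∧ #R ≤ 10 * a ^ 3 * t ∧
      ∀ u v, G.Adj u v → w s(u, v) ≤ W → W ≤ 2 * w s(u, v) →
        (∃ r ∈ R, IsNearHub w T G (w s(u, v)) r u) ∨
        wdist w (addEdges T F) u v ≤ w s(u, v) + 2 * a ^ 3 / M * w s(u, v) ^ 2 := by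
  have hW₀ : 0 < W := lt_of_lt_of_le (by positivity) hW
  have hκ := card_image_cell_eighth_le hW₀ hWM hf
  set σ := a ^ 3 * W ^ 2 / (4 * M) with hσ
  have hσ₀ : 0 < σ := by positivity
  have hMW : M ≤ W * a ^ 4 := (div_le_iff₀ (by positivity)).1 hW
  have ha' : (1 : ℝ) ≤ a := mod_cast ha
  have hMa : M / (2 * a ^ 3 * W) ≤ a / 2 := by
    rw [div_le_div_iff₀ (by positivity) two_pos]
    linarith
  have hκcard : #(univ.image (cell f (W / 8))) ≤ 10 * a ^ 3 * a := by
    rify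
    exact hκ.trans ((div_le_iff₀ hW₀).2 (by linarith))
  have hφcard : #(univ.image (cell (cellOffset f (W / 8)) σ)) ≤ 2 * a := by
    rify
    calc (#(univ.image (cell (cellOffset f (W / 8)) σ)) : ℝ) ≤ W / 8 / σ + 1 :=
          card_image_cell_le hσ₀ (by positivity) (cellOffset_mem_Icc (by positivity))
      _ = M / (2 * a ^ 3 * W) + 1 := by rw [hσ]; field
      _ ≤ 2 * a := by linarith
  obtain ⟨F, R, hF, hFcard, hR, hFR⟩ := exists_hubs_and_detours (w := w)
    (ρ := W / 8) G W hT (by positivity) ha hκcard hφcard ht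
    (fun u v h ↦ (hTf u v).trans (abs_sub_le_of_cell_eq (by positivity) h))
    (fun u v h h' ↦ (hTf u v).trans (abs_sub_le_of_cell_cellOffset_eq (by positivity) hσ₀ h h'))
  refine ⟨F, R, hF.trans fun _ he ↦ he.1, ?_, hR, fun u v huv hle hge ↦ ?_⟩
  · calc ∑ e ∈ F, (w e : ℝ) ≤ #F * W := sum_le_card_mul_of_subset_lightEdges hF
      _ ≤ #(univ.image (cell f (W / 8))) * a * (2 * a) ^ 2 * W := by gcongr; exact mod_cast hFcard
      _ ≤ 10 * M / W * a * (2 * a) ^ 2 * W := by gcongr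
      _ = 40 * a ^ 3 * M := by field
  · refine (hFR u v huv hle).imp ?_ fun h ↦ h.trans ?_
    · rintro ⟨r, hr, h⟩
      exact ⟨r, hr, h.trans (by linarith)⟩
    · gcongr _ + ?_
      calc 2 * σ = a ^ 3 * W ^ 2 / (2 * M) := by rw [hσ]; field
        _ ≤ a ^ 3 * (2 * w s(u, v)) ^ 2 / (2 * M) := by gcongr
        _ = 2 * a ^ 3 / M * w s(u, v) ^ 2 := by field

lemma exists_hubs_of_paths (hG : G.Connected) (hf : ∀ v, f v ∈ Set.Icc 0 M)
    (hTG : T ≤ G) (hT : T.Connected) (hTf : ∀ u v, wdist w T u v ≤ |f u - f v|) (hM : 0 < M)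
    (ha : 0 < a) (ht : Fintype.card V ^ 2 < 2 ^ t) (hW : 0 < W) (hWM : W ≤ 2 * M)
    (π : ∀ u v, G.Walk u v) :
    ∃ R : Finset V, #R ≤ 10 * a ^ 3 * t ∧ ∀ u v, (∀ e ∈ (π u v).edges, w e ≤ W) →
      (∃ r ∈ R, ∃ z ∈ (π u v).support, wdist w T r z ≤ W / 8) ∨
      wdist w G u v ≤ 2 * M / a ^ 3 := by
  have hGf : ∀ u v, wdist w G u v ≤ |f u - f v| := fun u v ↦ (wdist_mono hT hTG).trans (hTf u v)
  set q := ⌈M / (a ^ 3 * W)⌉₊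
  have hκ : #(univ.image (cell f (W / 8))) ≤ 10 * a ^ 3 * q := by
    rify
    calc (#(univ.image (cell f (W / 8))) : ℝ) ≤ 10 * M / W := card_image_cell_eighth_le hW hWM hf
      _ = 10 * a ^ 3 * (M / (a ^ 3 * W)) := by field
      _ ≤ 10 * a ^ 3 * q := by gcongr; exact Nat.le_ceil _
  let I : Finset (V × V) := {e | q ≤ #((π e.1 e.2).support.toFinset.image (cell f (W / 8)))}
  obtain ⟨R, hR, hhit⟩ := exists_hitting_set_of_image (κ := cell f (W / 8)) (t := t) (I := I)
    (A := fun e ↦ (π e.1 e.2).support.toFinset) (by positivity) (Nat.ceil_pos.2 (by positivity))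
    hκ ((card_le_univ I).trans_lt (by rwa [Fintype.card_prod, ← sq]))
    fun e he ↦ (mem_filter.1 he).2
  refine ⟨R, hR, fun u v hπ ↦ ?_⟩
  obtain hmany | hfew := le_or_gt q #((π u v).support.toFinset.image (cell f (W / 8)))
  · obtain ⟨r, hr, z, hz, hzr⟩ := hhit (u, v) (mem_filter.2 ⟨mem_univ _, hmany⟩)
    exact .inl ⟨r, hr, z, List.mem_toFinset.1 hz,
      (hTf r z).trans (abs_sub_le_of_cell_eq (by positivity) hzr.symm)⟩
  · right
    calc wdist w G u v ≤ 2 * W * #((π u v).support.toFinset.image (cell f (W / 8))) :=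
          wdist_le_mul_card_image_cell hG hGf (by positivity) (by linarith) (π u v) hπ
      _ ≤ 2 * W * (M / (a ^ 3 * W)) := by gcongr; exact (Nat.lt_ceil.1 hfew).le
      _ = 2 * M / a ^ 3 := by field

end Hubs

section Preserver

open Finset SimpleGraph

open scoped NNReal

variable {V : Type*} {G H H' T : SimpleGraph V} {w : Sym2 V → ℝ≥0} {f : V → ℝ} {r x z : V}
  {γ : ℕ → V} {i k m n y : ℕ} {δ M W : ℝ}

/-- The additive error with which `H` represents the distance from `r` to `z` in `G`. -/
noncomputable def excess (w : Sym2 V → ℝ≥0) (H G : SimpleGraph V) (r z : V) : ℝ :=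
  wdist w H r z - wdist w G r z

lemma excess_anti (hH : H.Connected) (h : H ≤ H') : excess w H' G r z ≤ excess w H G r z :=
  sub_le_sub_right (wdist_mono hH h) _

lemma excess_le_excess_add (hT : T.Connected) (hTH : T ≤ H) (hTG : T ≤ G)
    (hz : wdist w T z x ≤ δ) : excess w H G r x ≤ excess w H G r z + 2 * δ := by
  have hH := wdist_triangle (w := w) (hT.mono hTH) r z x
  have hG := wdist_triangle (w := w) (hT.mono hTG) r x z
  rw [wdist_comm (u := x)] at hG
  unfold excess
  linarith [wdist_mono (w := w) (u := z) (v := x) hT hTH,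
    wdist_mono (w := w) (u := z) (v := x) hT hTG]

/-- The weight of the `j`-th edge of the path `γ`, where edges of `T` count as free. -/
noncomputable def offTreeWeight (w : Sym2 V → ℝ≥0) (T : SimpleGraph V) (γ : ℕ → V) (j : ℕ) : ℝ :=
  if s(γ j, γ (j + 1)) ∉ T.edgeSet then w s(γ j, γ (j + 1)) else 0

lemma offTreeWeight_le (w : Sym2 V → ℝ≥0) (T : SimpleGraph V) (γ : ℕ → V) (j : ℕ) :
    offTreeWeight w T γ j ≤ w s(γ j, γ (j + 1)) := by
  unfold offTreeWeight
  split_ifs <;> simp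

lemma sum_offTreeWeight_le (hγ : IsGeodesic w G r n γ) (hik : i ≤ k) (hkn : k ≤ n) :
    ∑ j ∈ Ico i k, offTreeWeight w T γ j ≤ wdist w G r (γ k) - wdist w G r (γ i) := by
  rw [← sum_Ico_sub (fun j ↦ wdist w G r (γ j)) hik]
  refine sum_le_sum fun j hj ↦ ?_
  rw [hγ.wdist_succ j ((mem_Ico.1 hj).2.trans_le hkn), add_sub_cancel_left]
  exact offTreeWeight_le ..

lemma sum_offTreeWeight_le_mul_card (hγ : IsGeodesic w G r n γ) (hG : G.Connected)
    (hf : ∀ u v, wdist w G u v ≤ |f u - f v|) (hδ : 0 < δ) (hδW : δ ≤ W)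
    (hW : ∀ e ∈ G.edgeSet, e ∉ T.edgeSet → w e ≤ W) (hy : y ≤ n) :
    ∑ j ∈ Ico y n, offTreeWeight w T γ j ≤ 2 * W * #((Ioc y n).image fun i ↦ cell f δ (γ i)) := by
  have hW₀ : 0 ≤ W := hδ.le.trans hδW
  have hcount := le_add_mul_card_image_of_step_le
    (a := fun i ↦ ∑ j ∈ Ico y i, offTreeWeight w T γ j) (c := fun i ↦ cell f δ (γ i)) hy hW₀ ?_ ?_
  · simpa using hcount
  · intro i hi
    rw [sum_Ico_succ_top (mem_Ico.1 hi).1]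
    gcongr
    unfold offTreeWeight
    split_ifs with h
    · exact hW₀
    · exact hW _ (hγ.adj i (mem_Ico.1 hi).2) h
  · intro i hi j hj hij hcell
    rw [← sum_Ico_consecutive _ (mem_Ioc.1 hi).1.le hij]
    gcongr
    linarith [sum_offTreeWeight_le (T := T) hγ hij (mem_Ioc.1 hj).2,
      wdist_triangle (w := w) hG r (γ i) (γ j), hf (γ i) (γ j), abs_sub_le_of_cell_eq hδ hcell]

/-- The edges outside `T` of the path `γ` from its `y`-th to its `n`-th vertex. -/
noncomputable def offTreeEdges (T : SimpleGraph V) (γ : ℕ → V) (y n : ℕ) : Finset (Sym2 V) :=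
  {j ∈ Ico y n | s(γ j, γ (j + 1)) ∉ T.edgeSet}.image fun j ↦ s(γ j, γ (j + 1))

lemma offTreeEdges_subset (hγ : IsGeodesic w G r n γ) : ↑(offTreeEdges T γ y n) ⊆ G.edgeSet := by
  unfold offTreeEdges
  simp only [coe_image, coe_filter, Set.image_subset_iff]
  exact fun j hj ↦ hγ.adj j (mem_Ico.1 hj.1).2

lemma sum_offTreeEdges_le :
    ∑ e ∈ offTreeEdges T γ y n, (w e : ℝ) ≤ ∑ j ∈ Ico y n, offTreeWeight w T γ j := by
  unfold offTreeWeight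
  rw [← sum_filter]
  exact sum_image_le_of_nonneg fun _ _ ↦ NNReal.coe_nonneg _

lemma excess_le_of_offTreeEdges_subset (hγ : IsGeodesic w G r n γ) (hT : T.Connected)
    {E : Set (Sym2 V)} (hE : ↑(offTreeEdges T γ y n) ⊆ E) (hyi : y ≤ i) (hin : i ≤ n) :
    excess w (addEdges T E) G r (γ i) ≤ excess w (addEdges T E) G r (γ y) := by
  induction i, hyi using Nat.le_induction with
  | base => rfl
  | succ i hyi ih =>
    have hadj : (addEdges T E).Adj (γ i) (γ (i + 1)) := by
      by_cases h : T.Adj (γ i) (γ (i + 1))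
      · exact le_addEdges h
      · refine addEdges_adj (hγ.adj i hin) (hE (mem_image_of_mem _ ?_))
        simpa [h] using ⟨hyi, hin⟩
    refine le_trans ?_ (ih (by lia))
    unfold excess
    rw [hγ.wdist_succ i hin]
    linarith [wdist_triangle (w := w) (addEdges_connected hT E) r (γ i) (γ (i + 1)),
      wdist_le_of_adj (w := w) hadj]

lemma exists_le_two_mul_max {X : ℕ → ℝ} (hm : 0 < m) (hX : X 0 ≤ 2 ^ m * W) :
    ∃ k < m, X k ≤ 2 * max (X (k + 1)) W := by
  by_contra! h
  have hdouble : ∀ k < m, 2 ^ (k + 1) * max (X (k + 1)) W < X 0 := by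
    intro k hk
    induction k with
    | zero => simpa using h 0 hk
    | succ k ih =>
      calc 2 ^ (k + 2) * max (X (k + 2)) W = 2 ^ (k + 1) * (2 * max (X (k + 2)) W) := by ring
        _ < 2 ^ (k + 1) * X (k + 1) := by gcongr; exact h _ hk
        _ ≤ 2 ^ (k + 1) * max (X (k + 1)) W := by gcongr; exact le_max_left ..
        _ < X 0 := ih (by lia)
  obtain ⟨k, rfl⟩ := Nat.exists_eq_add_one.2 hm
  have : 2 ^ (k + 1) * W ≤ 2 ^ (k + 1) * max (X (k + 1)) W := by gcongr; exact le_max_right ..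
  linarith [hdouble k (by lia)]

/-- The pairs of a cell and a level `k < m` such that some vertex of the cell has excess at most
`k * (2 * δ)`. Their number is the potential function in the construction of preservers. -/
noncomputable def coveredLevels [Fintype V] (w : Sym2 V → ℝ≥0) (H G : SimpleGraph V) (f : V → ℝ)
    (δ : ℝ) (r : V) (m : ℕ) : Finset (ℤ × ℕ) :=
  {c ∈ univ.image (cell f δ) ×ˢ range m |
    ∃ z, cell f δ z = c.1 ∧ excess w H G r z ≤ c.2 * (2 * δ)}

lemma coveredLevels_mono [Fintype V] (hH : H.Connected) (h : H ≤ H') :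
    coveredLevels w H G f δ r m ⊆ coveredLevels w H' G f δ r m :=
  monotone_filter_right _ fun _ _ ⟨z, hz, hle⟩ ↦ ⟨z, hz, (excess_anti hH h).trans hle⟩

lemma card_coveredLevels_le [Fintype V] (hδ : 0 < δ) (hM : 0 ≤ M) (hf : ∀ v, f v ∈ Set.Icc 0 M) :
    (#(coveredLevels w H G f δ r m) : ℝ) ≤ m * (M / δ + 1) := by
  have hcard : #(coveredLevels w H G f δ r m) ≤ #(univ.image (cell f δ)) * m :=
    (card_le_card (filter_subset _ _)).trans_eq (by rw [card_product, card_range])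
  calc (#(coveredLevels w H G f δ r m) : ℝ) ≤ #(univ.image (cell f δ)) * m := mod_cast hcard
    _ ≤ (M / δ + 1) * m := by gcongr; exact card_image_cell_le hδ hM hf
    _ = m * (M / δ + 1) := mul_comm ..

lemma exists_last_index {P : ℕ → Prop} (h : P 0) (n : ℕ) :
    ∃ y ≤ n, P y ∧ ∀ i, y < i → i ≤ n → ¬ P i :=
  ⟨Nat.findGreatest P n, Nat.findGreatest_le n, Nat.findGreatest_spec n.zero_le h,
    fun _ ↦ Nat.findGreatest_is_greatest⟩

lemma card_image_cell_le_card_newly_covered [Fintype V] (hγ : IsGeodesic w G r n γ)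
    (hT : T.Connected) (hTG : T ≤ G) (hTf : ∀ u v, wdist w T u v ≤ |f u - f v|) (hδ : 0 < δ)
    {E E' : Set (Sym2 V)} (hEE' : E ⊆ E') (hE' : ↑(offTreeEdges T γ y n) ⊆ E') (hk : k < m)
    (hy : excess w (addEdges T E) G r (γ y) ≤ k * (2 * δ)) {y' : ℕ} (hyy' : y ≤ y')
    (hy' : ∀ i, y' < i → i ≤ n → (k + 1) * (2 * δ) < excess w (addEdges T E) G r (γ i)) :
    #((Ioc y' n).image fun i ↦ cell f δ (γ i)) +
        #(coveredLevels w (addEdges T E) G f δ r m) ≤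
      #(coveredLevels w (addEdges T E') G f δ r m) := by
  have hmono : addEdges T E ≤ addEdges T E' := addEdges_mono hEE'
  have hconn := addEdges_connected hT E
  have hinj : Function.Injective fun c : ℤ ↦ (c, k) := fun _ _ h ↦ congrArg Prod.fst h
  rw [← card_image_of_injective _ hinj, ← card_union_of_disjoint]
  · refine card_le_card (union_subset ?_ (coveredLevels_mono hconn hmono))
    simp only [subset_iff, mem_image, mem_Ioc, coveredLevels, mem_filter, mem_product, mem_range,
      mem_univ, true_and]
    rintro _ ⟨_, ⟨i, hi, rfl⟩, rfl⟩
    refine ⟨⟨⟨γ i, rfl⟩, hk⟩, γ i, rfl, ?_⟩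
    exact (excess_le_of_offTreeEdges_subset hγ hT hE' (hyy'.trans hi.1.le) hi.2).trans
      ((excess_anti hconn hmono).trans hy)
  · simp only [Finset.disjoint_left, mem_image, mem_Ioc, coveredLevels, mem_filter]
    rintro _ ⟨_, ⟨i, hi, rfl⟩, rfl⟩ ⟨-, z, hz, hle⟩
    have := excess_le_excess_add (r := r) hT (le_addEdges (E := E)) hTG
      ((hTf z (γ i)).trans (abs_sub_le_of_cell_eq hδ hz))
    linarith [hy' i hi.1 hi.2]

lemma exists_edges_covering_new_levels [Fintype V] (hG : G.Connected) (hT : T.Connected)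
    (hTG : T ≤ G) (hf : ∀ v, f v ∈ Set.Icc 0 M) (hTf : ∀ u v, wdist w T u v ≤ |f u - f v|)
    (hδ : 0 < δ) (hδW : δ ≤ W) (hW : ∀ e ∈ G.edgeSet, e ∉ T.edgeSet → w e ≤ W) (hm : 0 < m)
    (hMW : M ≤ 2 ^ m * W) {E : Set (Sym2 V)} (hx : m * (2 * δ) < excess w (addEdges T E) G r x) :
    ∃ F : Finset (Sym2 V), ↑F ⊆ G.edgeSet ∧
      #(coveredLevels w (addEdges T E) G f δ r m) <
        #(coveredLevels w (addEdges T (E ∪ F)) G f δ r m) ∧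
      ∑ e ∈ F, (w e : ℝ) + 4 * W * #(coveredLevels w (addEdges T E) G f δ r m) ≤
        4 * W * #(coveredLevels w (addEdges T (E ∪ F)) G f δ r m) := by
  have hW₀ : 0 < W := hδ.trans_le hδW
  have hGf : ∀ u v, wdist w G u v ≤ |f u - f v| := fun u v ↦ (wdist_mono hT hTG).trans (hTf u v)
  obtain ⟨n, γ, hγ, rfl⟩ := exists_isGeodesic w hG r x
  have hlast (k : ℕ) := exists_last_index
    (P := fun i ↦ excess w (addEdges T E) G r (γ i) ≤ k * (2 * δ))
    (by rw [hγ.zero, excess, wdist_self, wdist_self, sub_zero]; positivity) n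
  choose y hyn hy hgt using hlast
  simp only [not_le] at hgt
  obtain ⟨k, hk, hX⟩ := exists_le_two_mul_max (W := W)
    (X := fun k ↦ ∑ j ∈ Ico (y k) n, offTreeWeight w T γ j) hm <| by
      have := abs_sub_le_of_nonneg_of_le (hf r).1 (hf r).2 (hf (γ n)).1 (hf (γ n)).2
      linarith [sum_offTreeWeight_le (T := T) hγ (hyn 0) le_rfl, hGf r (γ n),
        wdist_nonneg (w := w) (G := G) (u := r) (v := γ (y 0))]
  have hlt : y (k + 1) < n := by
    refine (hyn _).lt_of_ne fun h ↦ ?_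
    have hyk := h ▸ hy (k + 1)
    have : ((k + 1 : ℕ) : ℝ) * (2 * δ) ≤ m * (2 * δ) := by gcongr; exact hk
    linarith
  have hyy : y k ≤ y (k + 1) := by
    by_contra! h
    have := hgt (k + 1) _ h (hyn k)
    push_cast at this
    linarith [hy k]
  have hnew := card_image_cell_le_card_newly_covered hγ hT hTG hTf hδ
    (E := E) (E' := E ∪ offTreeEdges T γ (y k) n) Set.subset_union_left Set.subset_union_right hk
    (hy k) hyy (by simpa using hgt (k + 1))
  have hcells : 0 < #((Ioc (y (k + 1)) n).image fun i ↦ cell f δ (γ i)) :=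
    card_pos.2 ((nonempty_Ioc.2 hlt).image _)
  refine ⟨offTreeEdges T γ (y k) n, offTreeEdges_subset hγ, by lia, ?_⟩
  have hone : (1 : ℝ) ≤ #((Ioc (y (k + 1)) n).image fun i ↦ cell f δ (γ i)) := mod_cast hcells
  have hmax : max (∑ j ∈ Ico (y (k + 1)) n, offTreeWeight w T γ j) W ≤
      2 * W * #((Ioc (y (k + 1)) n).image fun i ↦ cell f δ (γ i)) :=
    max_le (sum_offTreeWeight_le_mul_card hγ hG hGf hδ hδW hW (hyn _)) (by nlinarith [hW₀])
  rify at hnew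
  nlinarith [sum_offTreeEdges_le (w := w) (T := T) (γ := γ) (y := y k) (n := n)]

lemma exists_preserver [Finite V] (hG : G.Connected) (hT : T.Connected)
    (hTG : T ≤ G) (hf : ∀ v, f v ∈ Set.Icc 0 M) (hTf : ∀ u v, wdist w T u v ≤ |f u - f v|)
    (hδ : 0 < δ) (hδW : δ ≤ W) (hW : ∀ e ∈ G.edgeSet, e ∉ T.edgeSet → w e ≤ W) (hm : 0 < m)
    (hMW : M ≤ 2 ^ m * W) (r : V) :
    ∃ F : Finset (Sym2 V), ↑F ⊆ G.edgeSet ∧ ∑ e ∈ F, (w e : ℝ) ≤ 4 * W * (m * (M / δ + 1)) ∧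
      ∀ x, wdist w (addEdges T F) r x ≤ wdist w G r x + m * (2 * δ) := by
  have := Fintype.ofFinite V
  let N (F : Finset (Sym2 V)) := #(coveredLevels w (addEdges T F) G f δ r m)
  have hW₀ : 0 < W := hδ.trans_le hδW
  obtain ⟨F, hF, hmax⟩ := exists_max_image
    ({F | ↑F ⊆ G.edgeSet ∧ ∑ e ∈ F, (w e : ℝ) ≤ 4 * W * N F} : Finset (Finset (Sym2 V))) N
    ⟨∅, by simpa using mul_nonneg (by positivity) (Nat.cast_nonneg _)⟩
  simp only [mem_filter, mem_univ, true_and] at hF hmax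
  refine ⟨F, hF.1, hF.2.trans ?_, fun x ↦ ?_⟩
  · gcongr
    exact card_coveredLevels_le hδ ((hf r).1.trans (hf r).2) hf
  · by_contra! hx
    obtain ⟨E, hE, hlt, hsum⟩ := exists_edges_covering_new_levels (E := F) hG hT hTG hf hTf hδ hδW
      hW hm hMW (r := r) (x := x) (by unfold excess; linarith)
    rw [← coe_union] at hlt hsum
    refine (hmax (F ∪ E) ⟨by simpa using ⟨hF.1, hE⟩, ?_⟩).not_gt hlt
    linarith [hF.2, sum_union_inter (s₁ := F) (s₂ := E) (f := fun e ↦ (w e : ℝ)),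
      sum_nonneg (s := F ∩ E) fun e _ ↦ NNReal.coe_nonneg (w e)]

end Preserver

section FinsetBounds

open Finset

variable {α ι : Type*} [DecidableEq α] {g : α → ℝ}

lemma sum_union_le_add_sum (hg : ∀ a, 0 ≤ g a) (s t : Finset α) :
    ∑ a ∈ s ∪ t, g a ≤ ∑ a ∈ s, g a + ∑ a ∈ t, g a := by
  rw [← sum_union_inter]
  exact le_add_of_nonneg_right (sum_nonneg fun a _ ↦ hg a)

lemma sum_biUnion_le_card_mul (hg : ∀ a, 0 ≤ g a) {s : Finset ι} {A : ι → Finset α} {c : ℝ}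
    (h : ∀ i ∈ s, ∑ a ∈ A i, g a ≤ c) : ∑ a ∈ s.biUnion A, g a ≤ #s * c := by
  classical
  induction s using Finset.induction_on with
  | empty => simp
  | insert i s hi ih =>
    rw [forall_mem_insert] at h
    rw [biUnion_insert, card_insert_of_notMem hi]
    push_cast
    linarith [sum_union_le_add_sum hg (A i) (s.biUnion A), ih h.2]

end FinsetBounds

section Scales

open Finset

/-- A finite set of scales between `x` and `2 * y` that approximates every number in `(x, y]` from
above up to a factor `2`. -/
structure IsScaleSet (S : Finset ℝ) (x y : ℝ) : Prop where
  mem_Icc : ∀ W ∈ S, W ∈ Set.Icc x (2 * y)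
  exists_mem : ∀ z ∈ Set.Ioc x y, ∃ W ∈ S, z ≤ W ∧ W ≤ 2 * z

lemma IsScaleSet.filter_le {S : Finset ℝ} {x x' y : ℝ} (hS : IsScaleSet S x y) (hx : x ≤ x') :
    IsScaleSet {W ∈ S | x' ≤ W} x' y where
  mem_Icc W hW := ⟨(mem_filter.1 hW).2, (hS.mem_Icc W (mem_filter.1 hW).1).2⟩
  exists_mem z hz := by
    obtain ⟨W, hW, hzW, hWz⟩ := hS.exists_mem z ⟨hx.trans_lt hz.1, hz.2⟩
    exact ⟨W, mem_filter.2 ⟨hW, hz.1.le.trans hzW⟩, hzW, hWz⟩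

lemma exists_isScaleSet {x y : ℝ} {k : ℕ} (hx : 0 < x) (hk : y ≤ 2 ^ k * x) :
    ∃ S : Finset ℝ, #S ≤ k + 1 ∧ IsScaleSet S x y := by
  refine ⟨{W ∈ (range (k + 1)).image fun i : ℕ ↦ 2 ^ (i + 1) * x | W ≤ 2 * y},
    (card_filter_le _ _).trans (card_image_le.trans_eq (card_range _)), fun W hW ↦ ?_, ?_⟩
  · simp only [mem_filter, mem_image] at hW
    obtain ⟨⟨i, -, rfl⟩, hle⟩ := hW
    exact ⟨le_mul_of_one_le_left hx.le (one_le_pow₀ one_le_two), hle⟩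
  · rintro z ⟨hxz, hzy⟩
    obtain ⟨i, hi, hi'⟩ := exists_nat_pow_near ((one_le_div hx).2 hxz.le) one_lt_two
    rw [le_div_iff₀ hx] at hi
    rw [div_lt_iff₀ hx] at hi'
    have hik : i ≤ k := (pow_le_pow_iff_right₀ one_lt_two).1
      (le_of_mul_le_mul_right (hi.trans (hzy.trans hk)) hx)
    have hdouble : 2 ^ (i + 1) * x ≤ 2 * z := by rw [pow_succ']; linarith
    exact ⟨_, mem_filter.2 ⟨mem_image_of_mem _ (mem_range_succ_iff.2 hik), by linarith⟩,
      hi'.le, hdouble⟩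

end Scales

section Assembly

open Finset SimpleGraph

open scoped NNReal

variable {V : Type*} {G T : SimpleGraph V} {w : Sym2 V → ℝ≥0} {f : V → ℝ} {M W : ℝ} {a m t : ℕ}
  {S : Finset ℝ}

lemma wdist_le_of_isNearHub {H : SimpleGraph V} {r s u z : V} {ω : ℝ} (hT : T.Connected)
    (hH : H.Connected) (p : G.Walk s u) (hp : ∀ e ∈ p.edges, w e ≤ ω) (hωW : ω ≤ W)
    (hWω : W ≤ 2 * ω) (hz : z ∈ p.support) (hr : IsNearHub w T G ω r z)
    (hHr : ∀ x, wdist w H r x ≤ wdist w (lightGraph w T G W) r x + W / 4) :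
    wdist w H s u ≤ walkLength w p + 4 * ω := by
  have hL := lightGraph_connected (w := w) (G := G) (W := W) hT
  have hedge : ∀ e ∈ p.edges, e ∈ (lightGraph w T G W).edgeSet := fun e he ↦
    have heG := p.edges_subset_edgeSet he
    mem_edgeSet_addEdges heG ⟨heG, (hp e he).trans hωW⟩
  have hpath := wdist_add_wdist_le_walkLength (w := w) (p.transfer _ hedge) (x := z)
    (by simpa using hz)
  rw [walkLength_transfer, wdist_comm (u := s)] at hpath
  have hrz : wdist w (lightGraph w T G W) r z ≤ 3 / 2 * ω :=
    (wdist_mono (lightGraph_connected hT) (lightGraph_mono hωW)).trans hr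
  have hrL (x : V) := wdist_triangle (w := w) hL r z x
  calc wdist w H s u ≤ wdist w H r s + wdist w H r u := by
        rw [wdist_comm (u := r) (v := s)]
        exact wdist_triangle hH s r u
    _ ≤ walkLength w p + 4 * ω := by linarith [hHr s, hHr u, hrL s, hrL u]

lemma wdist_addEdges_le_of_edges_subset {E : Set (Sym2 V)} {u v : V} (p : G.Walk u v)
    (hp : ∀ e ∈ p.edges, e ∈ E) : wdist w (addEdges T E) u v ≤ walkLength w p :=
  walkLength_transfer (w := w) p (fun e he ↦ mem_edgeSet_addEdges (p.edges_subset_edgeSet he)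
    (hp e he)) ▸ wdist_le_walkLength _

lemma wdist_le_walkLength_add_mul {H : SimpleGraph V} {s u : V} {c K ω : ℝ} (hH : H.Connected)
    (hc : 0 ≤ c) (hω : 0 ≤ ω) (p : G.Walk s u)
    (hp : ∀ d ∈ p.darts, wdist w H d.fst d.snd ≤ w d.edge + c * w d.edge ^ 2)
    (hle : ∀ d ∈ p.darts, w d.edge ≤ ω) (hK : c * walkLength w p ≤ K) :
    wdist w H s u ≤ walkLength w p + K * ω := by
  have hdart : ∀ d ∈ p.darts, wdist w H d.fst d.snd ≤ (1 + c * ω) * w d.edge := by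
    intro d hd
    calc wdist w H d.fst d.snd ≤ w d.edge + c * (w d.edge * w d.edge) := sq (_ : ℝ) ▸ hp d hd
      _ ≤ w d.edge + c * (ω * w d.edge) := by gcongr; exact hle d hd
      _ = (1 + c * ω) * w d.edge := by ring
  calc wdist w H s u ≤ (1 + c * ω) * walkLength w p := wdist_le_mul_walkLength hH p hdart
    _ = walkLength w p + c * walkLength w p * ω := by ring
    _ ≤ walkLength w p + K * ω := by gcongr

lemma exists_lightGraph_preserver [Finite V] (hTG : T ≤ G) (hT : T.Connected)
    (hf : ∀ v, f v ∈ Set.Icc 0 M) (hTf : ∀ u v, wdist w T u v ≤ |f u - f v|) (hm : 0 < m)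
    (hW : 0 < W) (hWM : W ≤ 2 * M) (hMW : M ≤ 2 ^ m * W) (r : V) :
    ∃ F : Finset (Sym2 V), ↑F ⊆ G.edgeSet ∧ ∑ e ∈ F, (w e : ℝ) ≤ 40 * m ^ 2 * M ∧
      ∀ x, wdist w (addEdges T F) r x ≤ wdist w (lightGraph w T G W) r x + W / 4 := by
  have hm' : (1 : ℝ) ≤ m := mod_cast hm
  obtain ⟨F, hF, hsum, hdist⟩ := exists_preserver (δ := W / (8 * m)) (lightGraph_connected hT) hT
    le_addEdges hf hTf (by positivity) (div_le_self hW.le (by linarith))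
    (fun _ ↦ le_of_mem_edgeSet_lightGraph) hm hMW r
  refine ⟨F, hF.trans (edgeSet_mono (lightGraph_le hTG)), hsum.trans ?_, fun x ↦ ?_⟩
  · calc 4 * W * (m * (M / (W / (8 * m)) + 1)) = 32 * m ^ 2 * M + 4 * (m * 1) * W := by field
      _ ≤ 32 * m ^ 2 * M + 4 * (m * m) * (2 * M) := by gcongr
      _ = 40 * m ^ 2 * M := by ring
  · convert hdist x using 2
    field

lemma exists_lightGraph_preservers [Finite V] (hTG : T ≤ G) (hT : T.Connected)
    (hf : ∀ v, f v ∈ Set.Icc 0 M) (hTf : ∀ u v, wdist w T u v ≤ |f u - f v|) (hm : 0 < m)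
    {x : ℝ} (hx : 0 < x) (hMx : M ≤ 2 ^ m * x) (hS : IsScaleSet S x M) (R : Finset V) :
    ∃ F : Finset (Sym2 V), ↑F ⊆ G.edgeSet ∧ ∑ e ∈ F, (w e : ℝ) ≤ #R * #S * (40 * m ^ 2 * M) ∧
      ∀ r ∈ R, ∀ W ∈ S, ∀ z,
        wdist w (addEdges T F) r z ≤ wdist w (lightGraph w T G W) r z + W / 4 := by
  have hpres (r : V) (W) (hW : W ∈ S) := exists_lightGraph_preserver hTG hT hf hTf hm
    (hx.trans_le (hS.mem_Icc W hW).1) (hS.mem_Icc W hW).2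
    (hMx.trans (by gcongr; exact (hS.mem_Icc W hW).1)) r
  choose! F hF hsum hdist using hpres
  refine ⟨(R ×ˢ S).biUnion fun c ↦ F c.1 c.2, ?_, ?_, fun r hr W hW z ↦ ?_⟩
  · simp only [coe_biUnion, Set.iUnion₂_subset_iff, mem_coe, mem_product]
    exact fun c hc ↦ hF _ _ hc.2
  · rw [← Nat.cast_mul, ← card_product]
    exact sum_biUnion_le_card_mul (by simp) fun c hc ↦ hsum c.1 c.2 (mem_product.1 hc).2
  · refine (wdist_mono (addEdges_connected hT _) (addEdges_mono (coe_subset.2 ?_))).trans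
      (hdist r W hW z)
    exact subset_biUnion_of_mem (fun c : V × ℝ ↦ F c.1 c.2) (mk_mem_product hr hW)

variable [Fintype V]

lemma exists_hubs_of_edges (G : SimpleGraph V) (hT : T.Connected) (hf : ∀ v, f v ∈ Set.Icc 0 M)
    (hTf : ∀ u v, wdist w T u v ≤ |f u - f v|) (hM : 0 < M) (ha : 0 < a)
    (hn : Fintype.card V ≤ a ^ 5) (ht : Fintype.card V ^ 2 < 2 ^ t)
    (hS : IsScaleSet S (M / a ^ 4) M) :
    ∃ (F : Finset (Sym2 V)) (R : Finset V), ↑F ⊆ G.edgeSet ∧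
      ∑ e ∈ F, (w e : ℝ) ≤ (40 * #S + 1) * a ^ 3 * M ∧ #R ≤ (10 * #S + 1) * a ^ 3 * t ∧
      ∀ u v, G.Adj u v → w s(u, v) ≤ M → (∃ r ∈ R, IsNearHub w T G (w s(u, v)) r u) ∨
        wdist w (addEdges T F) u v ≤ w s(u, v) + 2 * a ^ 3 / M * w s(u, v) ^ 2 := by
  obtain ⟨F₀, R₀, hF₀, hsum₀, hcard₀, hlight⟩ := exists_hubs_of_light_edges (w := w) G hT hM.le ha
    hn ht
  have hheavy (W) (hW : W ∈ S) := exists_hubs_of_heavy_edges (w := w) G hT hf hTf hM ha ht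
    (hS.mem_Icc W hW).1 (hS.mem_Icc W hW).2
  choose! F R hF hsum hcard hheavy using hheavy
  refine ⟨F₀ ∪ S.biUnion F, R₀ ∪ S.biUnion R, by simpa using ⟨hF₀, hF⟩, ?_, ?_, ?_⟩
  · calc ∑ e ∈ F₀ ∪ S.biUnion F, (w e : ℝ) ≤ a ^ 3 * M + #S * (40 * a ^ 3 * M) :=
          (sum_union_le_add_sum (by simp) ..).trans
            (add_le_add hsum₀ (sum_biUnion_le_card_mul (by simp) hsum))
      _ = (40 * #S + 1) * a ^ 3 * M := by ring
  · calc #(R₀ ∪ S.biUnion R) ≤ a ^ 3 * t + #S * (10 * a ^ 3 * t) :=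
          (card_union_le ..).trans (add_le_add hcard₀ (card_biUnion_le_card_mul _ _ _ hcard))
      _ = (10 * #S + 1) * a ^ 3 * t := by ring
  · intro u v huv hwM
    simp only [mem_union, mem_biUnion, coe_union, coe_biUnion]
    obtain hle | hgt := le_or_gt (w s(u, v) : ℝ) (M / a ^ 4)
    · obtain ⟨r, hr, hnear⟩ | hdist := hlight u v huv hle
      · exact .inl ⟨r, .inl hr, hnear⟩
      · refine .inr ((wdist_mono (addEdges_connected hT _)
          (addEdges_mono Set.subset_union_left)).trans (hdist.trans ?_))
        exact le_add_of_nonneg_right (by positivity)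
    · obtain ⟨W, hW, hwW, hWw⟩ := hS.exists_mem _ ⟨hgt, hwM⟩
      obtain ⟨r, hr, hnear⟩ | hdist := hheavy W hW u v huv hwW hWw
      · exact .inl ⟨r, .inr ⟨W, hW, hr⟩, hnear⟩
      · refine .inr ((wdist_mono (addEdges_connected hT _) (addEdges_mono ?_)).trans hdist)
        exact fun e he ↦ .inr (Set.mem_biUnion hW he)

lemma exists_hubs_of_long_paths (hG : G.Connected) (hTG : T ≤ G) (hT : T.Connected)
    (hf : ∀ v, f v ∈ Set.Icc 0 M) (hTf : ∀ u v, wdist w T u v ≤ |f u - f v|) (hM : 0 < M)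
    (ha : 0 < a) (ht : Fintype.card V ^ 2 < 2 ^ t) {x : ℝ} (hx : 0 < x) (hS : IsScaleSet S x M)
    (π : ∀ u v, G.Walk u v) :
    ∃ R : Finset V, #R ≤ #S * (10 * a ^ 3 * t) ∧
      ∀ u v, ∀ ω ∈ Set.Ioc x M, (∀ e ∈ (π u v).edges, w e ≤ ω) →
        (∃ r ∈ R, ∃ z ∈ (π u v).support, IsNearHub w T G ω r z) ∨
        wdist w G u v ≤ 2 * M / a ^ 3 := by
  have hhub (W) (hW : W ∈ S) := exists_hubs_of_paths hG hf hTG hT hTf hM ha ht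
    (hx.trans_le (hS.mem_Icc W hW).1) (hS.mem_Icc W hW).2 π
  choose! R hcard hhub using hhub
  refine ⟨S.biUnion R, card_biUnion_le_card_mul _ _ _ hcard, fun u v ω hω hπ ↦ ?_⟩
  obtain ⟨W, hW, hωW, hWω⟩ := hS.exists_mem ω hω
  refine (hhub W hW u v fun e he ↦ (hπ e he).trans hωW).imp_left ?_
  rintro ⟨r, hr, z, hz, hrz⟩
  refine ⟨r, mem_biUnion.2 ⟨W, hW, hr⟩, z, hz, ?_⟩
  calc wdist w (lightGraph w T G ω) r z ≤ wdist w T r z := wdist_mono hT le_addEdges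
    _ ≤ W / 8 := hrz
    _ ≤ 3 / 2 * ω := by linarith [hx.trans hω.1]

lemma exists_hubs_or_detours (hG : G.Connected) (hTG : T ≤ G) (hT : T.Connected)
    (hf : ∀ v, f v ∈ Set.Icc 0 M) (hTf : ∀ u v, wdist w T u v ≤ |f u - f v|) (hM : 0 < M)
    (ha : 0 < a) (hn : Fintype.card V ≤ a ^ 5) (ht : Fintype.card V ^ 2 < 2 ^ t)
    (hS : IsScaleSet S (M / a ^ 7) M) (π : ∀ u v, G.Walk u v)
    (hπ : ∀ u v, walkLength w (π u v) = wdist w G u v) :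
    ∃ (F : Finset (Sym2 V)) (R : Finset V), ↑F ⊆ G.edgeSet ∧
      ∑ e ∈ F, (w e : ℝ) ≤ (40 * #S + 1) * a ^ 3 * M ∧ #R ≤ (20 * #S + 1) * a ^ 3 * t ∧
      ∀ u v, ∀ ω ∈ Set.Ioc (M / a ^ 7) M, (∀ e ∈ (π u v).edges, w e ≤ ω) →
        (∃ r ∈ R, ∃ z ∈ (π u v).support, IsNearHub w T G ω r z) ∨
        wdist w (addEdges T F) u v ≤ wdist w G u v + 4 * ω := by
  have hscale : M / a ^ 7 ≤ M / a ^ 4 := by gcongr; exacts [mod_cast ha, by lia]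
  have hcardS : #{W ∈ S | M / a ^ 4 ≤ W} ≤ #S := card_filter_le _ _
  obtain ⟨F, R, hF, hsum, hcard, hedge⟩ :=
    exists_hubs_of_edges G hT hf hTf hM ha hn ht (hS.filter_le hscale)
  obtain ⟨R', hcard', hpath⟩ := exists_hubs_of_long_paths hG hTG hT hf hTf hM ha ht
    (by positivity) hS π
  refine ⟨F, R ∪ R', hF, hsum.trans (by gcongr), ?_, fun u v ω hω hle ↦ ?_⟩
  · calc #(R ∪ R') ≤ (10 * #S + 1) * a ^ 3 * t + #S * (10 * a ^ 3 * t) :=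
          (card_union_le ..).trans (add_le_add (hcard.trans (by gcongr)) hcard')
      _ = (20 * #S + 1) * a ^ 3 * t := by ring
  · refine or_iff_not_imp_left.2 fun hfar ↦ ?_
    push Not at hfar
    have hshort : wdist w G u v ≤ 2 * M / a ^ 3 := by
      refine (hpath u v ω hω hle).resolve_left ?_
      rintro ⟨r, hr, z, hz, hrz⟩
      exact hfar r (mem_union_right _ hr) z hz hrz
    have hω₀ : 0 < ω := lt_of_le_of_lt (by positivity) hω.1
    rw [← hπ]
    refine wdist_le_walkLength_add_mul (c := 2 * a ^ 3 / M) (addEdges_connected hT _)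
      (by positivity) hω₀.le _ (fun d hd ↦ ?_) (fun d hd ↦ hle _ (List.mem_map_of_mem hd)) ?_
    · have hdω : w d.edge ≤ ω := hle _ (List.mem_map_of_mem hd)
      refine (hedge d.fst d.snd d.adj (hdω.trans hω.2)).resolve_left ?_
      rintro ⟨r, hr, hnear⟩
      exact hfar r (mem_union_left _ hr) _ ((π u v).dart_fst_mem_support_of_mem_darts hd)
        (hnear.mono hT hdω)
    · calc 2 * a ^ 3 / M * walkLength w (π u v) ≤ 2 * a ^ 3 / M * (2 * M / a ^ 3) := by
            rw [hπ]; gcongr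
        _ = 4 := by field

lemma exists_lightEdges_finset (w : Sym2 V → ℝ≥0) (G : SimpleGraph V) (hW : 0 ≤ W) :
    ∃ F : Finset (Sym2 V), ↑F = lightEdges w G W ∧
      ∑ e ∈ F, (w e : ℝ) ≤ Fintype.card V ^ 2 * W := by
  have hcard : #{e ∈ G.edgeFinset | w e ≤ W} ≤ Fintype.card V ^ 2 :=
    (card_filter_le _ _).trans
      (G.card_edgeFinset_le_card_choose_two.trans (Nat.choose_le_pow ..))
  have hF : (↑{e ∈ G.edgeFinset | w e ≤ W} : Set (Sym2 V)) = lightEdges w G W := by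
    ext e
    simp [lightEdges]
  refine ⟨_, hF, (sum_le_card_mul_of_subset_lightEdges hF.subset).trans ?_⟩
  gcongr
  exact mod_cast hcard

lemma hub_cost_le {s R : ℝ} (hM : 0 ≤ M) (hs₀ : 0 ≤ s) (hm : 0 < m) (ht : 0 < t)
    (hs : s ≤ m + 1) (hR : R ≤ (20 * s + 1) * a ^ 3 * t) :
    (40 * s + 1) * a ^ 3 * M + R * s * (40 * m ^ 2 * M) ≤ 3361 * m ^ 4 * t * a ^ 3 * M := by
  have hm' : (1 : ℝ) ≤ m := mod_cast hm
  have ht' : (1 : ℝ) ≤ t := mod_cast ht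
  have hs' : s ≤ 2 * m := by linarith
  calc (40 * s + 1) * a ^ 3 * M + R * s * (40 * m ^ 2 * M)
      ≤ (40 * s + 1) * a ^ 3 * M + (20 * s + 1) * a ^ 3 * t * s * (40 * m ^ 2 * M) := by gcongr
    _ ≤ (40 * (2 * m) + m) * a ^ 3 * M +
          (20 * (2 * m) + m) * a ^ 3 * t * (2 * m) * (40 * m ^ 2 * M) := by gcongr
    _ = (81 * m * 1 ^ 3 * 1 + 3280 * m ^ 4 * t) * a ^ 3 * M := by ring
    _ ≤ (81 * m * m ^ 3 * t + 3280 * m ^ 4 * t) * a ^ 3 * M := by gcongr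
    _ = 3361 * m ^ 4 * t * a ^ 3 * M := by ring

lemma exists_spanner_edges_of_scales (hG : G.Connected) (hTG : T ≤ G) (hT : T.Connected)
    (hf : ∀ v, f v ∈ Set.Icc 0 M) (hTf : ∀ u v, wdist w T u v ≤ |f u - f v|) (hM : 0 < M)
    (ha : 0 < a) (hn : Fintype.card V ≤ a ^ 5) (ht₀ : 0 < t) (ht : Fintype.card V ^ 2 < 2 ^ t)
    (hm : 0 < m) (ham : a ^ 7 ≤ 2 ^ m) (π : ∀ u v, G.Walk u v)
    (hπ : ∀ u v, walkLength w (π u v) = wdist w G u v) :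
    ∃ F : Finset (Sym2 V), ↑F ⊆ G.edgeSet ∧
      ∑ e ∈ F, (w e : ℝ) ≤ 3361 * m ^ 4 * t * a ^ 3 * M ∧
      ∀ u v, ∀ ω ∈ Set.Ioc (M / a ^ 7) M, (∀ e ∈ (π u v).edges, w e ≤ ω) →
        wdist w (addEdges T F) u v ≤ wdist w G u v + 4 * ω := by
  have hMx : M ≤ 2 ^ m * (M / a ^ 7) := by
    rw [mul_div_assoc', le_div_iff₀ (by positivity), mul_comm M]
    gcongr
    exact mod_cast ham
  obtain ⟨S, hScard, hS⟩ := exists_isScaleSet (by positivity) hMx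
  obtain ⟨F₁, R, hF₁, hsum₁, hR, hdist₁⟩ :=
    exists_hubs_or_detours hG hTG hT hf hTf hM ha hn ht hS π hπ
  obtain ⟨F₂, hF₂, hsum₂, hdist₂⟩ :=
    exists_lightGraph_preservers hTG hT hf hTf hm (by positivity) hMx hS R
  have hmono {E : Finset (Sym2 V)} (hE : E ⊆ F₁ ∪ F₂) (u v : V) :
      wdist w (addEdges T ↑(F₁ ∪ F₂)) u v ≤ wdist w (addEdges T E) u v :=
    wdist_mono (addEdges_connected hT _) (addEdges_mono (coe_subset.2 hE))
  refine ⟨F₁ ∪ F₂, by simpa using ⟨hF₁, hF₂⟩, ?_, fun u v ω hω hle ↦ ?_⟩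
  · linarith [sum_union_le_add_sum (g := fun e ↦ (w e : ℝ)) (by simp) F₁ F₂,
      hub_cost_le (s := #S) (R := #R) (a := a) hM.le (by positivity) hm ht₀ (mod_cast hScard)
        (mod_cast hR)]
  · obtain ⟨r, hr, z, hz, hrz⟩ | hdetour := hdist₁ u v ω hω hle
    · obtain ⟨W, hW, hωW, hWω⟩ := hS.exists_mem ω hω
      rw [← hπ]
      exact wdist_le_of_isNearHub hT (addEdges_connected hT _) (π u v) hle hωW hWω hz hrz
        fun x ↦ (hmono subset_union_right r x).trans (hdist₂ r hr W hW x)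
    · exact (hmono subset_union_left u v).trans hdetour

lemma exists_spanner_edges (hG : G.Connected) (hTG : T ≤ G) (hT : T.Connected)
    (hf : ∀ v, f v ∈ Set.Icc 0 M) (hTf : ∀ u v, wdist w T u v ≤ |f u - f v|) (hM : 0 < M)
    (ha : 0 < a) (hn : Fintype.card V ≤ a ^ 5) (ht₀ : 0 < t) (ht : Fintype.card V ^ 2 < 2 ^ t)
    (hm : 0 < m) (ham : a ^ 7 ≤ 2 ^ m) (π : ∀ u v, G.Walk u v)
    (hπ : ∀ u v, walkLength w (π u v) = wdist w G u v) :
    ∃ F : Finset (Sym2 V), ↑F ⊆ G.edgeSet ∧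
      ∑ e ∈ F, (w e : ℝ) ≤ 3362 * m ^ 4 * t * a ^ 3 * M ∧
      ∀ u v, ∀ ω : ℝ, 0 ≤ ω → (∀ e ∈ (π u v).edges, w e ≤ ω) →
        wdist w (addEdges T F) u v ≤ wdist w G u v + 4 * ω := by
  obtain ⟨F₁, hF₁, hsum₁, hdist₁⟩ :=
    exists_spanner_edges_of_scales hG hTG hT hf hTf hM ha hn ht₀ ht hm ham π hπ
  obtain ⟨F₀, hF₀, hsum₀⟩ := exists_lightEdges_finset w G (W := M / a ^ 7) (by positivity)
  have hmono {E : Finset (Sym2 V)} (hE : E ⊆ F₀ ∪ F₁) (u v : V) :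
      wdist w (addEdges T ↑(F₀ ∪ F₁)) u v ≤ wdist w (addEdges T E) u v :=
    wdist_mono (addEdges_connected hT _) (addEdges_mono (coe_subset.2 hE))
  refine ⟨F₀ ∪ F₁, ?_, ?_, fun u v ω hω hle ↦ ?_⟩
  · rw [coe_union, Set.union_subset_iff]
    exact ⟨hF₀ ▸ fun e he ↦ he.1, hF₁⟩
  · have hm' : (1 : ℝ) ≤ m := mod_cast hm
    have ht' : (1 : ℝ) ≤ t := mod_cast ht₀
    calc ∑ e ∈ F₀ ∪ F₁, (w e : ℝ)
        ≤ (Fintype.card V : ℝ) ^ 2 * (M / a ^ 7) + 3361 * m ^ 4 * t * a ^ 3 * M :=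
          (sum_union_le_add_sum (by simp) ..).trans (add_le_add hsum₀ hsum₁)
      _ ≤ (a ^ 5) ^ 2 * (M / a ^ 7) + 3361 * m ^ 4 * t * a ^ 3 * M := by
        gcongr
        exact mod_cast hn
      _ = (1 ^ 4 * 1 + 3361 * m ^ 4 * t) * a ^ 3 * M := by field
      _ ≤ (m ^ 4 * t + 3361 * m ^ 4 * t) * a ^ 3 * M := by gcongr
      _ = 3362 * m ^ 4 * t * a ^ 3 * M := by ring
  · wlog hωM : ω ≤ M generalizing ω
    · refine (this M hM.le (fun e he ↦ ?_) le_rfl).trans (by linarith)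
      linarith [le_walkLength_of_mem_edges (w := w) (π u v) he, hπ u v, hTf u v,
        wdist_mono (w := w) (u := u) (v := v) hT hTG,
        abs_sub_le_of_nonneg_of_le (hf u).1 (hf u).2 (hf v).1 (hf v).2]
    obtain hsmall | hlarge := le_or_gt ω (M / a ^ 7)
    · have hlight : ∀ e ∈ (π u v).edges, e ∈ (F₀ : Set (Sym2 V)) := fun e he ↦
        hF₀ ▸ ⟨(π u v).edges_subset_edgeSet he, (hle e he).trans hsmall⟩
      linarith [hmono subset_union_left u v, hπ u v,
        wdist_addEdges_le_of_edges_subset (w := w) (T := T) (π u v) hlight]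
    · exact (hmono subset_union_right u v).trans (hdist₁ u v ω ⟨hlarge, hωM⟩ hle)

end Assembly

section Parameters

lemma exists_nat_fifth_root {n : ℕ} (hn : 0 < n) :
    ∃ a : ℕ, 0 < a ∧ a ≤ n ∧ n ≤ a ^ 5 ∧ (a : ℝ) ^ 3 ≤ 8 * (n : ℝ) ^ (3 / 5 : ℝ) := by
  have hn' : (1 : ℝ) ≤ n := mod_cast hn
  set x : ℝ := (n : ℝ) ^ (1 / 5 : ℝ) with hx
  have hx₁ : 1 ≤ x := Real.one_le_rpow hn' (by norm_num)
  have hxn : x ≤ n := (Real.rpow_le_rpow_of_exponent_le hn' (by norm_num)).trans_eq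
    (Real.rpow_one _)
  have hx₅ : x ^ 5 = n := by
    rw [hx, ← Real.rpow_mul_natCast n.cast_nonneg]
    norm_num
  have hx₃ : x ^ 3 = (n : ℝ) ^ (3 / 5 : ℝ) := by
    rw [hx, ← Real.rpow_mul_natCast n.cast_nonneg]
    norm_num
  refine ⟨⌈x⌉₊, Nat.ceil_pos.2 (by positivity), Nat.ceil_le.2 hxn, ?_, ?_⟩
  · have : (n : ℝ) ≤ (⌈x⌉₊ : ℝ) ^ 5 := by
      rw [← hx₅]
      gcongr
      exact Nat.le_ceil x
    exact mod_cast this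
  · calc (⌈x⌉₊ : ℝ) ^ 3 ≤ (2 * x) ^ 3 := by
          gcongr
          linarith [Nat.ceil_lt_add_one (zero_le_one.trans hx₁)]
      _ = 8 * (n : ℝ) ^ (3 / 5 : ℝ) := by rw [mul_pow, hx₃]; norm_num

lemma natLog_two_add_one_le (n : ℕ) :
    (Nat.log 2 n + 1 : ℝ) ≤ 2 * (Real.log n + 1) := by
  have hlog : 0 ≤ Real.log n := Real.log_natCast_nonneg n
  have hlogb : Real.logb 2 n ≤ 2 * Real.log n := by
    rw [Real.logb, div_le_iff₀ (Real.log_pos one_lt_two)]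
    nlinarith [Real.log_two_gt_d9]
  have := Real.natLog_le_logb n 2
  push_cast at this
  linarith

lemma exists_parameters {n : ℕ} (hn : 0 < n) :
    ∃ a ℓ : ℕ, 0 < a ∧ 0 < ℓ ∧ n ≤ a ^ 5 ∧ n < 2 ^ ℓ ∧ a ≤ 2 ^ ℓ ∧
      (a : ℝ) ^ 3 * (ℓ : ℝ) ^ 5 ≤ 256 * (n : ℝ) ^ (3 / 5 : ℝ) * (Real.log n + 1) ^ 5 := by
  obtain ⟨a, ha, han, hna, ha₃⟩ := exists_nat_fifth_root hn
  have hnℓ : n < 2 ^ (Nat.log 2 n + 1) := Nat.lt_pow_succ_log_self one_lt_two n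
  refine ⟨a, Nat.log 2 n + 1, ha, by lia, hna, hnℓ, han.trans hnℓ.le, ?_⟩
  push_cast
  calc (a : ℝ) ^ 3 * (Nat.log 2 n + 1 : ℝ) ^ 5
      ≤ 8 * (n : ℝ) ^ (3 / 5 : ℝ) * (2 * (Real.log n + 1)) ^ 5 := by
        gcongr
        exact natLog_two_add_one_le n
    _ = 256 * (n : ℝ) ^ (3 / 5 : ℝ) * (Real.log n + 1) ^ 5 := by ring

lemma rpow_mul_log_add_one_pow_le {x : ℝ} (hx : 1 ≤ x) :
    x ^ (3 / 5 : ℝ) * (Real.log x + 1) ^ 5 ≤ 76 ^ 5 * x ^ (2 / 3 : ℝ) := by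
  have hx₀ : 0 < x := by positivity
  have hlog := Real.log_nonneg hx
  have hroot : (1 : ℝ) ≤ x ^ (1 / 75 : ℝ) := Real.one_le_rpow hx (by norm_num)
  have hlog_le : Real.log x + 1 ≤ 76 * x ^ (1 / 75 : ℝ) := by
    linarith [Real.log_le_rpow_div hx₀.le (ε := 1 / 75) (by norm_num)]
  calc x ^ (3 / 5 : ℝ) * (Real.log x + 1) ^ 5
      ≤ x ^ (3 / 5 : ℝ) * (76 * x ^ (1 / 75 : ℝ)) ^ 5 := by gcongr
    _ = 76 ^ 5 * (x ^ (3 / 5 : ℝ) * x ^ (1 / 15 : ℝ)) := by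
      rw [mul_pow, ← Real.rpow_mul_natCast hx₀.le]
      norm_num
      ring
    _ = 76 ^ 5 * x ^ (2 / 3 : ℝ) := by
      rw [← Real.rpow_add hx₀]
      norm_num

end Parameters

section Spanner

open Finset SimpleGraph

open scoped NNReal

variable {V : Type*} [Fintype V] {G T : SimpleGraph V} {w : Sym2 V → ℝ≥0}

lemma exists_edges_of_tree (hG : G.Connected) (hTG : T ≤ G) (hT : T.Connected)
    (π : ∀ u v, G.Walk u v) (hπ : ∀ u v, walkLength w (π u v) = wdist w G u v) :
    ∃ F : Finset (Sym2 V), ↑F ⊆ G.edgeSet ∧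
      ∑ e ∈ F, (w e : ℝ) ≤ 9 * 10 ^ 9 * (Fintype.card V : ℝ) ^ (3 / 5 : ℝ) *
        (Real.log (Fintype.card V) + 1) ^ 5 * ∑ e ∈ T.edgeFinset, (w e : ℝ) ∧
      ∀ u v, ∀ ω : ℝ, 0 ≤ ω → (∀ e ∈ (π u v).edges, w e ≤ ω) →
        wdist w (addEdges T F) u v ≤ wdist w G u v + 4 * ω := by
  have hV : 0 < Fintype.card V := have := hG.nonempty; Fintype.card_pos
  obtain ⟨a, ℓ, ha, hℓ, hna, hnℓ, haℓ, hcost⟩ := exists_parameters hV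
  have ht : Fintype.card V ^ 2 < 2 ^ (ℓ * 2) := pow_mul 2 ℓ 2 ▸ Nat.pow_lt_pow_left hnℓ two_ne_zero
  have hm : a ^ 7 ≤ 2 ^ (ℓ * 7) := pow_mul 2 ℓ 7 ▸ Nat.pow_le_pow_left haℓ 7
  set L := ∑ e ∈ T.edgeFinset, (w e : ℝ)
  obtain ⟨f, hf⟩ := exists_isLineEmbeddingOn_univ w hT
  have hfL (v : V) : f v ∈ Set.Icc 0 (2 * L) := ⟨hf.nonneg v trivial, hf.le v trivial⟩
  have hTf (u v : V) := hf.wdist_le u trivial v trivial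
  obtain hL | hL : 0 = L ∨ 0 < L := (sum_nonneg fun e _ ↦ (w e).2).eq_or_lt
  · refine ⟨∅, by simp, by simp [← hL], fun u v ω hω _ ↦ ?_⟩
    have hfuv := abs_sub_le_of_nonneg_of_le (hfL u).1 (hfL u).2 (hfL v).1 (hfL v).2
    linarith [wdist_mono (w := w) (u := u) (v := v) hT (le_addEdges (E := ↑(∅ : Finset (Sym2 V)))),
      hTf u v, wdist_nonneg (w := w) (G := G) (u := u) (v := v)]
  · obtain ⟨F, hF, hsum, hdist⟩ := exists_spanner_edges hG hTG hT hfL hTf (by positivity) ha hna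
      (by positivity) ht (by positivity) hm π hπ
    refine ⟨F, hF, hsum.trans ?_, hdist⟩
    calc 3362 * ((ℓ * 7 : ℕ) : ℝ) ^ 4 * ((ℓ * 2 : ℕ) : ℝ) * a ^ 3 * (2 * L)
        = 32288648 * ((a : ℝ) ^ 3 * (ℓ : ℝ) ^ 5) * L := by push_cast; ring
      _ ≤ 32288648 * (256 * (Fintype.card V : ℝ) ^ (3 / 5 : ℝ) *
            (Real.log (Fintype.card V) + 1) ^ 5) * L := by gcongr
      _ = 8265893888 * (Fintype.card V : ℝ) ^ (3 / 5 : ℝ) *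
            (Real.log (Fintype.card V) + 1) ^ 5 * L := by ring
      _ ≤ 9 * 10 ^ 9 * (Fintype.card V : ℝ) ^ (3 / 5 : ℝ) *
            (Real.log (Fintype.card V) + 1) ^ 5 * L := by
        have := Real.log_natCast_nonneg (Fintype.card V)
        gcongr
        norm_num

lemma sum_edgeFinset_addEdges_le (w : Sym2 V → ℝ≥0) (T : SimpleGraph V) (F : Finset (Sym2 V)) :
    ∑ e ∈ (addEdges T F).edgeFinset, (w e : ℝ) ≤
      ∑ e ∈ T.edgeFinset, (w e : ℝ) + ∑ e ∈ F, (w e : ℝ) := by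
  have hsub : (addEdges T F).edgeFinset ⊆ T.edgeFinset ∪ F := fun e he ↦ by
    rw [mem_edgeFinset, addEdges, edgeSet_sup, edgeSet_fromEdgeSet] at he
    exact mem_union.2 (he.imp mem_edgeFinset.2 fun h ↦ h.1)
  exact (sum_le_sum_of_subset_of_nonneg hsub (by simp)).trans (sum_union_le_add_sum (by simp) ..)

lemma exists_spanner_of_tree (hG : G.Connected) (hTG : T ≤ G) (hT : T.Connected)
    (π : ∀ u v, G.Walk u v) (hπ : ∀ u v, walkLength w (π u v) = wdist w G u v) :
    ∃ H ≤ G, H.Connected ∧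
      ∑ e ∈ H.edgeFinset, (w e : ℝ) ≤ 10 ^ 10 * (Fintype.card V : ℝ) ^ (3 / 5 : ℝ) *
        (Real.log (Fintype.card V) + 1) ^ 5 * ∑ e ∈ T.edgeFinset, (w e : ℝ) ∧
      ∀ u v, ∀ ω : ℝ, 0 ≤ ω → (∀ e ∈ (π u v).edges, w e ≤ ω) →
        wdist w H u v ≤ wdist w G u v + 4 * ω := by
  obtain ⟨F, hF, hsum, hdist⟩ := exists_edges_of_tree hG hTG hT π hπ
  refine ⟨addEdges T F, addEdges_le hTG hF, addEdges_connected hT _, ?_, hdist⟩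
  set n := Fintype.card V
  set L := ∑ e ∈ T.edgeFinset, (w e : ℝ)
  have hn : (1 : ℝ) ≤ n := have := hG.nonempty; mod_cast Fintype.card_pos
  have hlog := Real.log_nonneg hn
  have : 0 ≤ L := sum_nonneg fun e _ ↦ (w e).2
  calc ∑ e ∈ (addEdges T F).edgeFinset, (w e : ℝ)
      ≤ 1 * L + 9 * 10 ^ 9 * (n : ℝ) ^ (3 / 5 : ℝ) * (Real.log n + 1) ^ 5 * L :=
        (sum_edgeFinset_addEdges_le w T F).trans (by linarith)
    _ ≤ (n : ℝ) ^ (3 / 5 : ℝ) * (Real.log n + 1) ^ 5 * L +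
          9 * 10 ^ 9 * (n : ℝ) ^ (3 / 5 : ℝ) * (Real.log n + 1) ^ 5 * L := by
      gcongr
      exact one_le_mul_of_one_le_of_one_le (Real.one_le_rpow hn (by norm_num))
        (one_le_pow₀ (by linarith))
    _ = (9 * 10 ^ 9 + 1) * ((n : ℝ) ^ (3 / 5 : ℝ) * (Real.log n + 1) ^ 5 * L) := by ring
    _ ≤ 10 ^ 10 * ((n : ℝ) ^ (3 / 5 : ℝ) * (Real.log n + 1) ^ 5 * L) := by
      gcongr
      norm_num
    _ = 10 ^ 10 * (n : ℝ) ^ (3 / 5 : ℝ) * (Real.log n + 1) ^ 5 * L := by ring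

end Spanner

section ENNRealWeights

open Finset SimpleGraph

variable {V : Type} {G : SimpleGraph V} {w : Sym2 V → ℝ≥0∞} {s t : V}

lemma walkWeight_eq_ofReal (hw : ∀ e ∈ G.edgeSet, w e ≠ ⊤) (p : G.Walk s t) :
    walkWeight G w p = ENNReal.ofReal (walkLength (fun e ↦ (w e).toNNReal) p) := by
  induction p with
  | nil => simp [walkWeight]
  | @cons u v _ h p ih =>
    rw [walkLength_cons, ENNReal.ofReal_add NNReal.zero_le_coe (walkLength_nonneg _ p), ← ih,
      ENNReal.ofReal_coe_nnreal, ENNReal.coe_toNNReal (hw s(u, v) h)]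
    simp [walkWeight]

lemma gdist_eq_ofReal [Finite V] (hG : G.Connected) (hw : ∀ e ∈ G.edgeSet, w e ≠ ⊤) (s t : V) :
    gdist G w s t = ENNReal.ofReal (wdist (fun e ↦ (w e).toNNReal) G s t) := by
  refine le_antisymm ?_ (le_iInf fun p ↦ ?_)
  · obtain ⟨p, hp⟩ := exists_walkLength_eq_wdist (fun e ↦ (w e).toNNReal) hG s t
    rw [← hp, ← walkWeight_eq_ofReal hw]
    exact iInf_le _ p
  · rw [walkWeight_eq_ofReal hw]
    exact ENNReal.ofReal_le_ofReal (wdist_le_walkLength p)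

lemma walkLength_eq_wdist [Finite V] (hG : G.Connected) (hw : ∀ e ∈ G.edgeSet, w e ≠ ⊤)
    {p : G.Walk s t} (hp : walkWeight G w p = gdist G w s t) :
    walkLength (fun e ↦ (w e).toNNReal) p = wdist (fun e ↦ (w e).toNNReal) G s t := by
  rwa [walkWeight_eq_ofReal hw, gdist_eq_ofReal hG hw,
    ENNReal.ofReal_eq_ofReal_iff (walkLength_nonneg _ p) wdist_nonneg] at hp

lemma le_maxEdge (w : Sym2 V → ℝ≥0∞) (p : G.Walk s t) {e : Sym2 V} (he : e ∈ p.edges) :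
    w e ≤ maxEdge G w p :=
  List.le_max_of_le (List.mem_map_of_mem he) le_rfl

lemma maxEdge_ne_top (hw : ∀ e ∈ G.edgeSet, w e ≠ ⊤) (p : G.Walk s t) : maxEdge G w p ≠ ⊤ := by
  have hle : maxEdge G w p ≤ walkWeight G w p :=
    List.max_le_of_forall_le _ _ fun _ ↦ List.le_sum_of_mem
  exact ne_top_of_le_ne_top (walkWeight_eq_ofReal hw p ▸ ENNReal.ofReal_ne_top) hle

lemma exists_totalWeight_le_mstWeight [Finite V] (hG : G.Connected) (w : Sym2 V → ℝ≥0∞) :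
    ∃ T ≤ G, T.Connected ∧ totalWeight T w ≤ mstWeight G w := by
  obtain ⟨T, ⟨hTG, hT⟩, hmin⟩ :=
    {T : SimpleGraph V | T ≤ G ∧ T.Connected}.toFinite.exists_minimalFor (totalWeight · w) _
      ⟨G, le_rfl, hG⟩
  refine ⟨T, hTG, hT, le_iInf₂ fun T' hT'G ↦ le_iInf fun hT' ↦ ?_⟩
  exact (le_total _ _).elim id (hmin ⟨hT'G, hT'⟩)

lemma totalWeight_eq_ofReal [Fintype V] (hw : ∀ e ∈ G.edgeSet, w e ≠ ⊤) :
    totalWeight G w = ENNReal.ofReal (∑ e ∈ G.edgeFinset, ((w e).toNNReal : ℝ)) := by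
  have hcoe : ∀ e ∈ G.edgeFinset, ENNReal.ofReal (w e).toNNReal = w e := fun e he ↦ by
    rw [ENNReal.ofReal_coe_nnreal, ENNReal.coe_toNNReal (hw e (mem_edgeFinset.1 he))]
  rw [ENNReal.ofReal_sum_of_nonneg fun _ _ ↦ NNReal.zero_le_coe, sum_congr rfl hcoe, totalWeight,
    tsum_fintype]
  exact (sum_subtype _ (fun _ ↦ mem_edgeFinset) w).symm

end ENNRealWeights

theorem lightweight_four_plus_eps_W_spanner_general :
    ∃ C : ℝ, 0 < C ∧
      ∀ (V : Type) [Fintype V] (G : SimpleGraph V) (w : Sym2 V → ℝ≥0∞),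
        G.Connected → (∀ e ∈ G.edgeSet, w e ≠ ⊤) →
        ∀ π : (s t : V) → G.Walk s t, IsShortestPathScheme G w π →
          ∃ H : SimpleGraph V, H ≤ G ∧
            totalWeight H w ≤
              ENNReal.ofReal (C * (Fintype.card V : ℝ) ^ (3 / 5 : ℝ) *
                (Real.log (Fintype.card V) + 1) ^ 5) * mstWeight G w ∧
            ∀ s t : V, gdist H w s t ≤ gdist G w s t + 4 * maxEdge G w (π s t) := by
  refine ⟨10 ^ 10, by norm_num, fun V _ G w hG hw π hπ ↦ ?_⟩
  obtain ⟨T, hTG, hT, hmst⟩ := exists_totalWeight_le_mstWeight hG w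
  obtain ⟨H, hHG, hH, hweight, hdist⟩ := exists_spanner_of_tree hG hTG hT π fun s t ↦
    walkLength_eq_wdist hG hw (hπ s t)
  have hw_of_le {G' : SimpleGraph V} (h : G' ≤ G) : ∀ e ∈ G'.edgeSet, w e ≠ ⊤ := fun e he ↦
    hw e (SimpleGraph.edgeSet_mono h he)
  refine ⟨H, hHG, ?_, fun s t ↦ ?_⟩
  · have := Real.log_natCast_nonneg (Fintype.card V)
    grw [← hmst]
    rw [totalWeight_eq_ofReal (hw_of_le hTG), totalWeight_eq_ofReal (hw_of_le hHG),
      ← ENNReal.ofReal_mul (by positivity)]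
    exact ENNReal.ofReal_le_ofReal hweight
  · have hmax := maxEdge_ne_top hw (π s t)
    rw [gdist_eq_ofReal hG hw, gdist_eq_ofReal hH (hw_of_le hHG), ← ENNReal.ofReal_toReal hmax,
      ← ENNReal.ofReal_ofNat 4, ← ENNReal.ofReal_mul (by norm_num),
      ← ENNReal.ofReal_add wdist_nonneg (by positivity)]
    exact ENNReal.ofReal_le_ofReal (hdist s t _ ENNReal.toReal_nonneg fun e he ↦
      ENNReal.toReal_mono hmax (le_maxEdge w _ he))

/-- For every ε > 0, every connected weighted graph `G` on `n` vertices admits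
a subgraph `H` with `d_H(s,t) ≤ d_G(s,t) + (4+ε)·W(s,t)` for all vertices `s, t`, and with
lightness at most `C(ε)·n^(2/3)`, where `C(ε) = C·(1/ε)^j` depends only polynomially
on `1/ε`. -/
theorem lightweight_four_plus_eps_W_spanner :
    ∃ (C : ℝ) (j : ℕ), 0 < C ∧
      ∀ (V : Type) [Fintype V] (G : SimpleGraph V) (w : Sym2 V → ℝ≥0∞),
        G.Connected → PosWeights G w →
        ∀ π : (s t : V) → G.Walk s t, IsShortestPathScheme G w π →
          ∀ ε : ℝ, 0 < ε →
            ∃ H : SimpleGraph V, H ≤ G ∧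
              totalWeight H w ≤
                ENNReal.ofReal (C * (1 / ε) ^ j * (Fintype.card V : ℝ) ^ ((2 : ℝ) / 3)) *
                  mstWeight G w ∧
              ∀ s t : V,
                gdist H w s t ≤
                  gdist G w s t + ENNReal.ofReal (4 + ε) * maxEdge G w (π s t) := by
  obtain ⟨C, hC, h⟩ := lightweight_four_plus_eps_W_spanner_general
  refine ⟨76 ^ 5 * C, 0, by positivity, fun V _ G w hG hw π hπ ε hε ↦ ?_⟩
  have hn : (1 : ℝ) ≤ Fintype.card V := have := hG.nonempty; mod_cast Fintype.card_pos
  obtain ⟨H, hHG, hweight, hdist⟩ := h V G w hG (fun e he ↦ (hw e he).2) π hπ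
  refine ⟨H, hHG, hweight.trans ?_, fun s t ↦ (hdist s t).trans ?_⟩
  · gcongr ENNReal.ofReal ?_ * _
    linarith [mul_le_mul_of_nonneg_left (rpow_mul_log_add_one_pow_le hn) hC.le]
  · gcongr
    exact ENNReal.ofReal_ofNat 4 ▸ ENNReal.ofReal_le_ofReal (by linarith)
end

section
/- Every connected unweighted graph G on n vertices and every set 𝒫 ⊆ V × V of vertex pairs admits a subgraph H with at most C·n·|𝒫|^{1/3} edges (for a universal constant C) such that d_H(s,t) ≤ d_G(s,t) + 2 for every pair (s,t) ∈ 𝒫. -/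
open scoped Classical

/-!
Fix a threshold `d ≈ |𝒫|^(1/3)`. Keep every edge with an endpoint of degree below `d`. Each vertex
is adjacent to at most three vertices of a geodesic, so a geodesic with `w` vertices of degree at
least `d` has at least `d * w / 3` neighbours. A sample of `d` random vertices therefore misses the
neighbourhood of such a geodesic with probability at most `(1 - d * w / (3 * n)) ^ d`, which is at
most `3 * n / (d ^ 2 * w)`: the expected number of edges needed to complete all the missed
geodesics is at most `3 * n * |𝒫| / d ^ 2`. Complete these, and add a shortest-path tree rooted at
each sampled vertex; a geodesic adjacent to a sampled vertex `v` is then replaced by the detour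
through `v`, which is at most two steps longer.
-/

section Sampling

theorem succ_mul_pow_mul_le_add_pow_succ {R : Type*} [CommSemiring R] [PartialOrder R]
    [IsOrderedRing R] {a b : R} (ha : 0 ≤ a) (hb : 0 ≤ b) (k : ℕ) :
    (k + 1) * (a ^ k * b) ≤ (a + b) ^ (k + 1) := by
  have binomial_term_le := Finset.single_le_sum (s := Finset.range (k + 1 + 1))
    (f := fun m => a ^ m * b ^ (k + 1 - m) * (k + 1).choose m) (fun _ _ => by positivity)
    (Finset.mem_range.2 (by omega : k < k + 1 + 1))
  simpa [add_pow, mul_comm] using binomial_term_le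

variable {ι α : Type*} [Fintype ι] [Fintype α] [Nonempty α]

theorem exists_sample_sum_missed_mul_le (N : ι → Finset α) (w : ι → ℕ) (k : ℕ) :
    ∃ c : Fin k → α, (∑ i with ∀ j, c j ∉ N i, w i) * Fintype.card α ^ k ≤
      ∑ i, w i * (N i)ᶜ.card ^ k := by
  have card_missing (i : ι) :
      (Finset.univ.filter fun c : Fin k → α => ∀ j, c j ∉ N i).card = (N i)ᶜ.card ^ k := by
    rw [← Fintype.card_piFinset_const]
    congr 1
    ext c
    simp only [Finset.mem_filter_univ, Fintype.mem_piFinset, Finset.mem_compl]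
  have sum_samples :
      ∑ c : Fin k → α, ∑ i with ∀ j, c j ∉ N i, w i = ∑ i, w i * (N i)ᶜ.card ^ k := by
    simp_rw [Finset.sum_filter]
    rw [Finset.sum_comm]
    refine Finset.sum_congr rfl fun i _ => ?_
    rw [← Finset.sum_filter, Finset.sum_const, card_missing, smul_eq_mul, mul_comm]
  have sum_le_sum : ∑ c : Fin k → α, (∑ i with ∀ j, c j ∉ N i, w i) * Fintype.card α ^ k ≤
      ∑ _c : Fin k → α, ∑ i, w i * (N i)ᶜ.card ^ k := by
    rw [← Finset.sum_mul, sum_samples, Finset.sum_const, Finset.card_univ, Fintype.card_fun,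
      Fintype.card_fin, smul_eq_mul, mul_comm]
  obtain ⟨c, -, hc⟩ := Finset.exists_le_of_sum_le Finset.univ_nonempty sum_le_sum
  exact ⟨c, hc⟩

theorem exists_card_le_sum_filter_disjoint_le (N : ι → Finset α) (w : ι → ℕ) {a b : ℕ}
    (hN : ∀ i, a * w i ≤ b * (N i).card) (k : ℕ) :
    ∃ S : Finset α, S.card ≤ k ∧
      (k + 1) * (a * ∑ i with Disjoint (N i) S, w i) ≤ b * Fintype.card α * Fintype.card ι := by
  obtain ⟨c, hc⟩ := exists_sample_sum_missed_mul_le N w k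
  refine ⟨Finset.univ.image c, Finset.card_image_le.trans_eq (by simp), ?_⟩
  have missed_iff (i : ι) : Disjoint (N i) (Finset.univ.image c) ↔ ∀ j, c j ∉ N i := by
    simp [Finset.disjoint_right]
  simp_rw [missed_iff]
  have term_le (i : ι) :
      (k + 1) * a * (w i * (N i)ᶜ.card ^ k) ≤ b * Fintype.card α ^ (k + 1) := by
    calc (k + 1) * a * (w i * (N i)ᶜ.card ^ k)
        = (k + 1) * (N i)ᶜ.card ^ k * (a * w i) := by ring
      _ ≤ (k + 1) * (N i)ᶜ.card ^ k * (b * (N i).card) := Nat.mul_le_mul_left _ (hN i)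
      _ = b * ((k + 1) * ((N i)ᶜ.card ^ k * (N i).card)) := by ring
      _ ≤ b * ((N i)ᶜ.card + (N i).card) ^ (k + 1) := by
        gcongr; exact succ_mul_pow_mul_le_add_pow_succ (Nat.zero_le _) (Nat.zero_le _) _
      _ = b * Fintype.card α ^ (k + 1) := by rw [Finset.card_compl_add_card]
  refine Nat.le_of_mul_le_mul_right ?_ (pow_pos (Fintype.card_pos (α := α)) k)
  calc (k + 1) * (a * ∑ i with ∀ j, c j ∉ N i, w i) * Fintype.card α ^ k
      = (k + 1) * a * ((∑ i with ∀ j, c j ∉ N i, w i) * Fintype.card α ^ k) := by ring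
    _ ≤ (k + 1) * a * ∑ i, w i * (N i)ᶜ.card ^ k := by gcongr
    _ = ∑ i, (k + 1) * a * (w i * (N i)ᶜ.card ^ k) := Finset.mul_sum _ _ _
    _ ≤ Fintype.card ι • (b * Fintype.card α ^ (k + 1)) :=
      Finset.sum_le_card_nsmul _ _ _ fun i _ => term_le i
    _ = b * Fintype.card α * Fintype.card ι * Fintype.card α ^ k := by rw [smul_eq_mul]; ring

end Sampling

section EdgeCount

variable {V : Type*}

theorem ncard_edgeSet_sup_le (G H : SimpleGraph V) :
    (G ⊔ H).edgeSet.ncard ≤ G.edgeSet.ncard + H.edgeSet.ncard := by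
  rw [SimpleGraph.edgeSet_sup]
  exact Set.ncard_union_le _ _

theorem ncard_edgeSet_biSup_le {ι : Type*} (S : Finset ι) (F : ι → SimpleGraph V) :
    (⨆ i ∈ S, F i).edgeSet.ncard ≤ ∑ i ∈ S, (F i).edgeSet.ncard := by
  simp only [SimpleGraph.edgeSet_iSup]
  exact Finset.set_ncard_biUnion_le S fun i => (F i).edgeSet

end EdgeCount

section ShortestPathTree

variable {V : Type*} {G : SimpleGraph V}

theorem exists_adj_edist_add_one_le {u v : V} (huv : u ≠ v) (hr : G.Reachable u v) :
    ∃ x, G.Adj u x ∧ G.edist x v + 1 ≤ G.edist u v := by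
  obtain ⟨p, hp⟩ := hr.exists_walk_length_eq_edist
  cases p with
  | nil => exact absurd rfl huv
  | cons hadj q =>
    refine ⟨_, hadj, ?_⟩
    rw [← hp, SimpleGraph.Walk.length_cons, Nat.cast_succ]
    gcongr
    exact SimpleGraph.edist_le q

theorem edist_le_edist_of_forall_exists_adj {T : SimpleGraph V} {v : V}
    (hT : ∀ u ≠ v, G.Reachable u v → ∃ x, T.Adj u x ∧ G.edist x v + 1 ≤ G.edist u v) (u : V) :
    T.edist u v ≤ G.edist u v := by
  have edist_le_of_edist_le (n : ℕ) : ∀ u, G.edist u v ≤ n → T.edist u v ≤ n := by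
    induction n with
    | zero => simp
    | succ n ih =>
      intro u hu
      rcases eq_or_ne u v with rfl | huv
      · simp
      obtain ⟨x, hux, hx⟩ := hT u huv
        (SimpleGraph.reachable_of_edist_ne_top (hu.trans_lt (ENat.natCast_lt_top _)).ne)
      have edist_x_le : G.edist x v ≤ n :=
        (ENat.add_le_add_iff_right ENat.one_ne_top).1 (hx.trans hu)
      calc T.edist u v ≤ T.edist u x + T.edist x v := SimpleGraph.edist_triangle
        _ ≤ 1 + n := add_le_add (SimpleGraph.edist_eq_one_iff_adj.2 hux).le (ih x edist_x_le)
        _ = (n + 1 : ℕ) := by rw [Nat.cast_succ, add_comm]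
  by_cases hr : G.Reachable u v
  · simpa [hr.coe_dist_eq_edist] using edist_le_of_edist_le (G.dist u v) u
  · exact le_top.trans_eq (SimpleGraph.edist_eq_top_of_not_reachable hr).symm

theorem exists_shortestPathTree [Finite V] (G : SimpleGraph V) (v : V) :
    ∃ T ≤ G, T.edgeSet.ncard ≤ Nat.card V ∧ ∀ u, T.edist u v ≤ G.edist u v := by
  have : Nonempty V := ⟨v⟩
  choose! parent adj_parent edist_parent using
    fun (u : V) (huv : u ≠ v) (hr : G.Reachable u v) => exists_adj_edist_add_one_le huv hr
  refine ⟨G ⊓ .fromEdgeSet (Set.range fun u => s(u, parent u)), inf_le_left, ?_,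
    edist_le_edist_of_forall_exists_adj fun u huv hr => ⟨parent u,
      ⟨adj_parent u huv hr, Set.mem_range_self u, (adj_parent u huv hr).ne⟩,
      edist_parent u huv hr⟩⟩
  calc _ ≤ (Set.range fun u => s(u, parent u)).ncard :=
        Set.ncard_le_ncard fun e he => by
          induction e with
          | _ a b => exact he.2.1
    _ ≤ Nat.card V := by
      rw [← Set.image_univ, ← Set.ncard_univ]
      exact Set.ncard_image_le

theorem exists_subgraph_edist_le_detour [Finite V] (G : SimpleGraph V) (S : Finset V) :
    ∃ F ≤ G, F.edgeSet.ncard ≤ S.card * Nat.card V ∧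
      ∀ v ∈ S, ∀ s t, F.edist s t ≤ G.edist s v + G.edist v t := by
  choose T T_le card_T edist_T using exists_shortestPathTree G
  refine ⟨⨆ v ∈ S, T v, iSup₂_le fun v _ => T_le v, ?_, fun v hv s t => ?_⟩
  · calc (⨆ v ∈ S, T v).edgeSet.ncard ≤ ∑ v ∈ S, (T v).edgeSet.ncard := ncard_edgeSet_biSup_le S T
      _ ≤ S.card * Nat.card V := Finset.sum_le_card_nsmul _ _ _ fun v _ => card_T v
  · calc (⨆ v ∈ S, T v).edist s t ≤ (T v).edist s t :=
          SimpleGraph.edist_anti (le_iSup₂_of_le v hv le_rfl)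
      _ ≤ (T v).edist s v + (T v).edist v t := SimpleGraph.edist_triangle
      _ ≤ G.edist s v + G.edist v t := by
        rw [(T v).edist_comm (u := v), G.edist_comm (u := v)]
        exact add_le_add (edist_T v s) (edist_T v t)

end ShortestPathTree

section Geodesics

variable {V : Type*} {G : SimpleGraph V} {s t : V}

theorem le_add_length_of_length_eq_dist {p : G.Walk s t} (hp : p.length = G.dist s t) {i j : ℕ}
    (hj : j ≤ p.length) (q : G.Walk (p.getVert i) (p.getVert j)) : j ≤ i + q.length := by
  have hshort := SimpleGraph.dist_le (((p.take i).append q).append (p.drop j))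
  simp only [SimpleGraph.Walk.length_append, SimpleGraph.Walk.take_length,
    SimpleGraph.Walk.drop_length, ← hp] at hshort
  omega

theorem card_filter_adj_getVert_le_three {p : G.Walk s t} (hp : p.length = G.dist s t)
    {J : Finset ℕ} (hJ : ∀ k ∈ J, k ≤ p.length) (v : V) :
    (J.filter fun k => G.Adj (p.getVert k) v).card ≤ 3 := by
  rcases (J.filter fun k => G.Adj (p.getVert k) v).eq_empty_or_nonempty with hK | hK
  · simp [hK]
  set K := J.filter fun k => G.Adj (p.getVert k) v
  have hmin := (Finset.mem_filter.1 (K.min'_mem hK)).2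
  have K_subset : K ⊆ Finset.Icc (K.min' hK) (K.min' hK + 2) := by
    intro k hk
    obtain ⟨hkJ, hkv⟩ := Finset.mem_filter.1 hk
    exact Finset.mem_Icc.2 ⟨K.min'_le k hk,
      le_add_length_of_length_eq_dist hp (hJ k hkJ) (.cons hmin hkv.symm.toWalk)⟩
  simpa [add_assoc] using Finset.card_le_card K_subset

variable [Fintype V]

/-- The vertices adjacent to some vertex of the walk `p`. -/
noncomputable def walkNeighborFinset (p : G.Walk s t) : Finset V :=
  Finset.univ.filter fun v => ∃ x ∈ p.support, G.Adj x v

/-- The positions `k` of the walk `p` whose vertex has degree at least `d`. The final position is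
left out, so that each `k` stands for the edge from `p.getVert k` to `p.getVert (k + 1)`. -/
noncomputable def highDegreeIndices (p : G.Walk s t) (d : ℕ) : Finset ℕ :=
  (Finset.range p.length).filter fun k => d ≤ G.degree (p.getVert k)

theorem mul_card_highDegreeIndices_le {p : G.Walk s t} (hp : p.length = G.dist s t) (d : ℕ) :
    d * (highDegreeIndices p d).card ≤ 3 * (walkNeighborFinset p).card := by
  rw [mul_comm d, mul_comm 3]
  refine Finset.card_mul_le_card_mul (fun k v => G.Adj (p.getVert k) v) (fun k hk => ?_)
    fun v _ => ?_
  · have bipartiteAbove_eq : (walkNeighborFinset p).bipartiteAbove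
        (fun k v => G.Adj (p.getVert k) v) k = G.neighborFinset (p.getVert k) := by
      ext v
      simpa [walkNeighborFinset] using fun hv => ⟨_, p.getVert_mem_support k, hv⟩
    rw [bipartiteAbove_eq, SimpleGraph.card_neighborFinset_eq_degree]
    exact (Finset.mem_filter.1 hk).2
  · refine card_filter_adj_getVert_le_three hp (fun k hk => ?_) v
    exact (Finset.mem_range.1 (Finset.mem_filter.1 hk).1).le

theorem edist_add_edist_le_of_mem_walkNeighborFinset {p : G.Walk s t} {v : V}
    (hv : v ∈ walkNeighborFinset p) : G.edist s v + G.edist v t ≤ p.length + 2 := by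
  obtain ⟨x, hx, hxv⟩ := (Finset.mem_filter.1 hv).2
  calc G.edist s v + G.edist v t
      ≤ ((p.takeUntil x hx).concat hxv).length +
          (SimpleGraph.Walk.cons hxv.symm (p.dropUntil x hx)).length :=
        add_le_add (SimpleGraph.edist_le _) (SimpleGraph.edist_le _)
    _ = p.length + 2 := by
      have length_split := congrArg SimpleGraph.Walk.length (p.take_spec hx)
      rw [SimpleGraph.Walk.length_append] at length_split
      rw [SimpleGraph.Walk.length_concat, SimpleGraph.Walk.length_cons, ← length_split]
      push_cast
      ring

/-- The edges of `G` with an endpoint of degree less than `d`. -/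
def lowDegreeSubgraph (G : SimpleGraph V) (d : ℕ) : SimpleGraph V where
  Adj u v := G.Adj u v ∧ (G.degree u < d ∨ G.degree v < d)
  symm := ⟨fun _ _ h => ⟨h.1.symm, h.2.symm⟩⟩
  loopless := ⟨fun _ h => h.1.ne rfl⟩

/-- The edges of the walk `p` that start, in the direction of `p`, at a vertex of degree at least
`d`. -/
def highDegreePart (p : G.Walk s t) (d : ℕ) : SimpleGraph V :=
  .fromEdgeSet ((fun k => s(p.getVert k, p.getVert (k + 1))) '' highDegreeIndices p d)

theorem lowDegreeSubgraph_le (G : SimpleGraph V) (d : ℕ) : lowDegreeSubgraph G d ≤ G :=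
  fun _ _ h => h.1

theorem ncard_edgeSet_lowDegreeSubgraph_le (G : SimpleGraph V) (d : ℕ) :
    (lowDegreeSubgraph G d).edgeSet.ncard ≤ Fintype.card V * d := by
  have edgeSet_subset : (lowDegreeSubgraph G d).edgeSet ⊆
      ((Finset.univ.filter fun v => G.degree v < d).biUnion
        fun v => G.incidenceFinset v : Finset (Sym2 V)) := by
    intro e he
    induction e with
    | _ u v =>
      simp only [Finset.coe_biUnion, Finset.mem_coe, Finset.mem_filter_univ, Set.mem_iUnion]
      obtain ⟨hadj, hu | hv⟩ := he
      · exact ⟨u, hu, (SimpleGraph.mem_incidenceFinset ..).2 ⟨hadj, Sym2.mem_mk_left u v⟩⟩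
      · exact ⟨v, hv, (SimpleGraph.mem_incidenceFinset ..).2 ⟨hadj, Sym2.mem_mk_right u v⟩⟩
  calc (lowDegreeSubgraph G d).edgeSet.ncard
      ≤ ((Finset.univ.filter fun v => G.degree v < d).biUnion
        fun v => G.incidenceFinset v).card := by
        rw [← Set.ncard_coe_finset]
        exact Set.ncard_le_ncard edgeSet_subset
    _ ≤ (Finset.univ.filter fun v => G.degree v < d).card * d := by
      refine Finset.card_biUnion_le_card_mul _ _ _ fun v hv => ?_
      rw [SimpleGraph.card_incidenceFinset_eq_degree]
      exact (Finset.mem_filter.1 hv).2.le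
    _ ≤ Fintype.card V * d := Nat.mul_le_mul_right _ (Finset.card_le_univ _)

theorem highDegreePart_le (p : G.Walk s t) (d : ℕ) : highDegreePart p d ≤ G := by
  intro u v huv
  obtain ⟨⟨k, hk, hkuv⟩, -⟩ := huv
  rw [← SimpleGraph.mem_edgeSet, ← hkuv]
  exact p.adj_getVert_succ (Finset.mem_range.1 (Finset.mem_filter.1 hk).1)

theorem ncard_edgeSet_highDegreePart_le (p : G.Walk s t) (d : ℕ) :
    (highDegreePart p d).edgeSet.ncard ≤ (highDegreeIndices p d).card := by
  rw [highDegreePart, SimpleGraph.edgeSet_fromEdgeSet]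
  calc _ ≤ ((fun k => s(p.getVert k, p.getVert (k + 1))) '' highDegreeIndices p d).ncard :=
        Set.ncard_le_ncard Set.sdiff_subset
    _ ≤ (highDegreeIndices p d : Set ℕ).ncard := Set.ncard_image_le
    _ = (highDegreeIndices p d).card := Set.ncard_coe_finset _

theorem edist_le_length_of_lowDegreeSubgraph_le_of_highDegreePart_le {H : SimpleGraph V}
    {p : G.Walk s t} {d : ℕ} (hlow : lowDegreeSubgraph G d ≤ H) (hhigh : highDegreePart p d ≤ H) :
    H.edist s t ≤ p.length := by
  have edges_mem : ∀ e ∈ p.edges, e ∈ H.edgeSet := by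
    intro e he
    induction e with
    | _ u v =>
      obtain ⟨k, hk, hkuv⟩ := p.mk_mem_edges_iff_exists.1 he
      rw [← hkuv, SimpleGraph.mem_edgeSet]
      have hadj := p.adj_getVert_succ hk
      rcases lt_or_ge (G.degree (p.getVert k)) d with hdeg | hdeg
      · exact hlow ⟨hadj, .inl hdeg⟩
      · refine hhigh ⟨Set.mem_image_of_mem _ ?_, hadj.ne⟩
        exact Finset.mem_filter.2 ⟨Finset.mem_range.2 hk, hdeg⟩
  simpa using SimpleGraph.edist_le (p.transfer H edges_mem)

theorem exists_subgraph_edist_le_length {ι : Type*} {s t : ι → V} (p : ∀ i, G.Walk (s i) (t i))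
    (d : ℕ) (U : Finset ι) :
    ∃ M ≤ G, M.edgeSet.ncard ≤ Fintype.card V * d + ∑ i ∈ U, (highDegreeIndices (p i) d).card ∧
      ∀ i ∈ U, M.edist (s i) (t i) ≤ (p i).length := by
  refine ⟨lowDegreeSubgraph G d ⊔ ⨆ i ∈ U, highDegreePart (p i) d,
    sup_le (lowDegreeSubgraph_le G d) (iSup₂_le fun i _ => highDegreePart_le (p i) d), ?_,
    fun i hi => edist_le_length_of_lowDegreeSubgraph_le_of_highDegreePart_le le_sup_left
      (le_sup_of_le_right (le_iSup₂_of_le i hi le_rfl))⟩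
  refine (ncard_edgeSet_sup_le _ _).trans
    (add_le_add (ncard_edgeSet_lowDegreeSubgraph_le G d) ?_)
  exact (ncard_edgeSet_biSup_le U _).trans
    (Finset.sum_le_sum fun i _ => ncard_edgeSet_highDegreePart_le (p i) d)

end Geodesics

section Spanner

theorem exists_plus_two_spanner_of_geodesics {ι V : Type*} [Fintype ι] [Fintype V]
    {G : SimpleGraph V} {s t : ι → V} (p : ∀ i, G.Walk (s i) (t i))
    (hp : ∀ i, (p i).length = G.dist (s i) (t i)) {d : ℕ} (hd : Fintype.card ι ≤ d ^ 3) :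
    ∃ H ≤ G, H.edgeSet.ncard ≤ 5 * Fintype.card V * d ∧
      ∀ i, H.edist (s i) (t i) ≤ (p i).length + 2 := by
  rcases isEmpty_or_nonempty ι with hι | hι
  · exact ⟨⊥, bot_le, by simp, isEmptyElim⟩
  have : Nonempty V := hι.map s
  have hd0 : 0 < d := Nat.pos_of_ne_zero fun h => by simp [h] at hd
  obtain ⟨S, hS, hmissed⟩ := exists_card_le_sum_filter_disjoint_le
    (fun i => walkNeighborFinset (p i)) (fun i => (highDegreeIndices (p i) d).card)
    (fun i => mul_card_highDegreeIndices_le (hp i) d) d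
  let U : Finset ι := Finset.univ.filter fun i => Disjoint (walkNeighborFinset (p i)) S
  have card_missed : ∑ i ∈ U, (highDegreeIndices (p i) d).card ≤ 3 * Fintype.card V * d := by
    refine Nat.le_of_mul_le_mul_left ?_ (mul_pos hd0 hd0)
    calc d * d * ∑ i ∈ U, (highDegreeIndices (p i) d).card
        = d * (d * ∑ i ∈ U, (highDegreeIndices (p i) d).card) := mul_assoc _ _ _
      _ ≤ (d + 1) * (d * ∑ i ∈ U, (highDegreeIndices (p i) d).card) := by gcongr; omega
      _ ≤ 3 * Fintype.card V * Fintype.card ι := hmissed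
      _ ≤ 3 * Fintype.card V * d ^ 3 := by gcongr
      _ = d * d * (3 * Fintype.card V * d) := by ring
  obtain ⟨F, F_le, card_F, edist_F⟩ := exists_subgraph_edist_le_detour G S
  obtain ⟨M, M_le, card_M, edist_M⟩ := exists_subgraph_edist_le_length p d U
  refine ⟨F ⊔ M, sup_le F_le M_le, ?_, fun i => ?_⟩
  · calc (F ⊔ M).edgeSet.ncard ≤ F.edgeSet.ncard + M.edgeSet.ncard := ncard_edgeSet_sup_le F M
      _ ≤ d * Fintype.card V + (Fintype.card V * d + 3 * Fintype.card V * d) := by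
        rw [Nat.card_eq_fintype_card] at card_F
        gcongr
        · exact card_F.trans (Nat.mul_le_mul_right _ hS)
        · exact card_M.trans (Nat.add_le_add_left card_missed _)
      _ = 5 * Fintype.card V * d := by ring
  · by_cases hi : Disjoint (walkNeighborFinset (p i)) S
    · calc (F ⊔ M).edist (s i) (t i) ≤ M.edist (s i) (t i) := SimpleGraph.edist_anti le_sup_right
        _ ≤ (p i).length := edist_M i ((Finset.mem_filter_univ i).2 hi)
        _ ≤ (p i).length + 2 := le_self_add
    · obtain ⟨v, hvN, hvS⟩ := Finset.not_disjoint_iff.1 hi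
      calc (F ⊔ M).edist (s i) (t i) ≤ F.edist (s i) (t i) := SimpleGraph.edist_anti le_sup_left
        _ ≤ G.edist (s i) v + G.edist v (t i) := edist_F v hvS _ _
        _ ≤ (p i).length + 2 := edist_add_edist_le_of_mem_walkNeighborFinset hvN

end Spanner

theorem exists_le_cube_le_two_mul_rpow (m : ℕ) :
    ∃ d : ℕ, m ≤ d ^ 3 ∧ (d : ℝ) ≤ 2 * (m : ℝ) ^ ((1 : ℝ) / 3) := by
  rcases m.eq_zero_or_pos with rfl | hm
  · exact ⟨0, by simp⟩
  have one_le_root : 1 ≤ (m : ℝ) ^ ((1 : ℝ) / 3) :=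
    Real.one_le_rpow (by exact_mod_cast hm) (by norm_num)
  refine ⟨⌈(m : ℝ) ^ ((1 : ℝ) / 3)⌉₊, ?_, Nat.ceil_le_two_mul (by linarith)⟩
  have le_ceil_cube : (m : ℝ) ≤ (⌈(m : ℝ) ^ ((1 : ℝ) / 3)⌉₊ : ℝ) ^ 3 := by
    calc (m : ℝ) = ((m : ℝ) ^ ((1 : ℝ) / 3)) ^ 3 := by
          rw [← Real.rpow_natCast, ← Real.rpow_mul (Nat.cast_nonneg m)]
          norm_num
      _ ≤ (⌈(m : ℝ) ^ ((1 : ℝ) / 3)⌉₊ : ℝ) ^ 3 := by gcongr; exact Nat.le_ceil _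
  exact_mod_cast le_ceil_cube

theorem unweighted_pairwise_plus_two_spanner_general {V : Type*} [Fintype V] (G : SimpleGraph V)
    (P : Set (V × V)) :
    ∃ H ≤ G,
      (H.edgeSet.ncard : ℝ) ≤ 10 * (Fintype.card V : ℝ) * (P.ncard : ℝ) ^ ((1 : ℝ) / 3) ∧
        ∀ s t : V, (s, t) ∈ P → H.edist s t ≤ G.edist s t + 2 := by
  let R : Set (V × V) := {q ∈ P | G.Reachable q.1 q.2}
  have card_R_le : Fintype.card R ≤ P.ncard := by
    rw [← Nat.card_eq_fintype_card, Nat.card_coe_set_eq]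
    exact Set.ncard_le_ncard (Set.sep_subset _ _)
  obtain ⟨d, hPd, hd⟩ := exists_le_cube_le_two_mul_rpow P.ncard
  choose p hp using fun q : R => q.2.2.exists_walk_length_eq_dist
  obtain ⟨H, H_le, card_H, edist_H⟩ :=
    exists_plus_two_spanner_of_geodesics p hp (card_R_le.trans hPd)
  refine ⟨H, H_le, ?_, fun s t hst => ?_⟩
  · calc (H.edgeSet.ncard : ℝ) ≤ 5 * Fintype.card V * d := by exact_mod_cast card_H
      _ ≤ 5 * Fintype.card V * (2 * (P.ncard : ℝ) ^ ((1 : ℝ) / 3)) := by gcongr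
      _ = 10 * (Fintype.card V : ℝ) * (P.ncard : ℝ) ^ ((1 : ℝ) / 3) := by ring
  · by_cases hr : G.Reachable s t
    · simpa [hp, hr.coe_dist_eq_edist] using edist_H ⟨(s, t), hst, hr⟩
    · simp [SimpleGraph.edist_eq_top_of_not_reachable hr]

/-- Every connected unweighted graph `G` on `n` vertices and every set
`𝒫 ⊆ V × V` of vertex pairs admits a subgraph `H` on at most `C·n·|𝒫|^(1/3)` edges (for a
universal constant `C`) such that `d_H(s,t) ≤ d_G(s,t) + 2` for every `(s,t) ∈ 𝒫`
(distances measured as extended naturals, so unreachable pairs have infinite distance). -/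
theorem unweighted_pairwise_plus_two_spanner :
    ∃ C : ℝ, 0 < C ∧
      ∀ (V : Type) [Fintype V] (G : SimpleGraph V), G.Connected →
        ∀ P : Set (V × V),
          ∃ H : SimpleGraph V, H ≤ G ∧
            (H.edgeSet.ncard : ℝ) ≤
              C * (Fintype.card V : ℝ) * (P.ncard : ℝ) ^ ((1 : ℝ) / 3) ∧
            ∀ s t : V, (s, t) ∈ P → H.edist s t ≤ G.edist s t + 2 := by
  exact ⟨10, by norm_num, fun V _ G _ P => unweighted_pairwise_plus_two_spanner_general G P⟩
end
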